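/- arXiv:1506.01022 — 7 statements merged into one kernel-verified Lean document; each statement's English description precedes it below -/
import Mathlib

section
/- Fix d and n, let F be the free abelian group on injections f : [d] → [n] with S_n acting by postcomposition, and fix a ≤ b with 2b ≤ n. Then F^{a,b+1} ⊆ F^{a,b} + Σ_{S ∈ Σ(a,b)} J_S·F_{=S}, where F^{a,c} is the subgroup spanned by injections f such that no S ∈ Σ(a,c) satisfies S ⊆ im f, F_{=S} is the subgroup spanned by injections f with im f ∩ [2b] = S, and for S ∈ Σ(a,b) with elements s_1 < ⋯ < s_b and complement [2b]∖S with elements t_1 < ⋯ < t_b, J_S := ∏_i J^{t_i}_{s_i} ∈ ℤ[S_n]. -/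
/-!
Put `T(f) = im f ∩ [2b]`, and let `w(f)` be the sum of the elements of `T(f)`.

If `im f` contains some `S ∈ Σ(a,b)` but no element of `Σ(a,b+1)`, then `T(f) = S`: adjoining a
further element of `[2b]` to `S` would give an element of `Σ(a,b+1)`
(`insert_mem_SigmaAB`). So it suffices to treat injections with `|T(f)| = b`, and these are handled
by downward induction on `w(f)` (`of_mem_of_card_eq`). If `T(f)` is not in `Σ(a,b)`, then `f` lies
in `F^{a,b}`. Otherwise `T(f) = S ∈ Σ(a,b)`, and the ballot condition defining `Σ(b)` forces
`s_i < t_i` for all `i` (`orderIsoOfFin_lt_compl`). Expanding `J_S` therefore writes `J_S f - f` as a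
combination of injections `g` obtained from `f` by replacing a nonempty set of the values `s_i`
by the larger values `t_i`; each has `|T(g)| = b` and `w(g) > w(f)`
(`compList_sub_mem`), so the induction applies to it.
-/

/-- `Σ(b)`: the set of `b`-element subsets `S ⊆ [2b] = {1,…,2b}` whose `i`-th smallest
element is at most `2i − 1` for each `1 ≤ i ≤ b` (written 0-indexed below: the
`(i+1)`-st smallest element is at most `2(i+1) − 1 = 2i + 1`). -/
def SigmaSet (b : ℕ) : Set (Finset ℕ) :=
  {S | S ⊆ Finset.Icc 1 (2 * b) ∧ ∃ h : S.card = b,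
    ∀ i : Fin b, ((S.orderIsoOfFin h i : ℕ)) ≤ 2 * (i : ℕ) + 1}

/-- Composition (in the given order) of a list of additive endomorphisms. -/
def compList {A : Type} [AddCommGroup A] : List (A →+ A) → (A →+ A)
  | [] => AddMonoidHom.id A
  | f :: l => f.comp (compList l)

/-- The permutation `ℤ[S_n]`-module `F = ℤ[Inj([d],[n])]`: the free abelian group on
the injections `[d] ↪ [n]`, with `σ · f = σ ∘ f`. -/
abbrev FInj (d n : ℕ) : Type :=
  FreeAbelianGroup (↥(Finset.Icc 1 d) ↪ ↥(Finset.Icc 1 n))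

/-- The action of a permutation `σ ∈ S_n` on `F` by postcomposition. -/
def permAct (d n : ℕ) (σ : Equiv.Perm ↥(Finset.Icc 1 n)) : FInj d n →+ FInj d n :=
  FreeAbelianGroup.map (fun f => f.trans σ.toEmbedding)

/-- The operator `J^i_j = id − (i j)` acting on `F`. -/
def JopF (d n : ℕ) (i j : ↥(Finset.Icc 1 n)) : FInj d n →+ FInj d n :=
  AddMonoidHom.id _ - permAct d n (Equiv.swap i j)

/-- The image of an injection `f : [d] ↪ [n]` as a subset of `ℕ`. -/
def imSet {d n : ℕ} (f : ↥(Finset.Icc 1 d) ↪ ↥(Finset.Icc 1 n)) : Finset ℕ :=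
  Finset.image (fun x => (f x : ℕ)) Finset.univ

/-- `Σ(a,b) = {S ∈ Σ(b) : [a] ⊆ S}`. -/
def SigmaAB (a b : ℕ) : Set (Finset ℕ) :=
  {S ∈ SigmaSet b | Finset.Icc 1 a ⊆ S}

/-- The subgroup `F^{a,c} ⊆ F` spanned by the injections `f` whose image contains no
element of `Σ(a,c)`. -/
def Fab (d n a c : ℕ) : AddSubgroup (FInj d n) :=
  AddSubgroup.closure {y | ∃ f : ↥(Finset.Icc 1 d) ↪ ↥(Finset.Icc 1 n),
    (∀ S ∈ SigmaAB a c, ¬ S ⊆ imSet f) ∧ y = FreeAbelianGroup.of f}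

/-- The subgroup `F_{=S} ⊆ F` spanned by the injections `f` with `im f ∩ [2b] = S`. -/
def FeqS (d n b : ℕ) (S : Finset ℕ) : AddSubgroup (FInj d n) :=
  AddSubgroup.closure {y | ∃ f : ↥(Finset.Icc 1 d) ↪ ↥(Finset.Icc 1 n),
    imSet f ∩ Finset.Icc 1 (2 * b) = S ∧ y = FreeAbelianGroup.of f}

/-- The operator `J_S = ∏ᵢ J^{t_i}_{s_i} ∈ ℤ[S_n]` acting on `F`, where
`s_1 < ⋯ < s_b` are the elements of `S` and `t_1 < ⋯ < t_b` those of `[2b] ∖ S`. -/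
def JSop (d n b : ℕ) (S : Finset ℕ) (hsub : S ⊆ Finset.Icc 1 (2 * b))
    (h2b : 2 * b ≤ n) (hc : S.card = b)
    (hc' : ((Finset.Icc 1 (2 * b)) \ S).card = b) :
    FInj d n →+ FInj d n :=
  compList (List.ofFn fun i : Fin b =>
    JopF d n
      ⟨((((Finset.Icc 1 (2 * b)) \ S).orderIsoOfFin hc' i : ℕ)), by
        have h1 := ((((Finset.Icc 1 (2 * b)) \ S).orderIsoOfFin hc' i)).2
        have h2 : ((((Finset.Icc 1 (2 * b)) \ S).orderIsoOfFin hc' i : ℕ))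
            ∈ Finset.Icc 1 (2 * b) := Finset.sdiff_subset h1
        simp only [Finset.mem_Icc] at h2 ⊢
        omega⟩
      ⟨((S.orderIsoOfFin hc i : ℕ)), by
        have h1 := ((S.orderIsoOfFin hc i)).2
        have h2 : ((S.orderIsoOfFin hc i : ℕ)) ∈ Finset.Icc 1 (2 * b) := hsub h1
        simp only [Finset.mem_Icc] at h2 ⊢
        omega⟩)

/-! The counting function of a finite set determines its ordered enumeration. -/

lemma succ_le_card_filter {S : Finset ℕ} {m : ℕ} (h : S.card = m) (i : Fin m) {k : ℕ}
    (hk : (S.orderIsoOfFin h i : ℕ) ≤ k) : (i : ℕ) + 1 ≤ (S.filter (· ≤ k)).card := by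
  have hsub : (Finset.Iic i).image (fun j => (S.orderIsoOfFin h j : ℕ)) ⊆ S.filter (· ≤ k) := by
    intro x hx
    simp only [Finset.mem_image, Finset.mem_Iic] at hx
    obtain ⟨j, hj, rfl⟩ := hx
    refine Finset.mem_filter.2 ⟨(S.orderIsoOfFin h j).2, le_trans ?_ hk⟩
    exact_mod_cast (S.orderIsoOfFin h).monotone hj
  have hc := Finset.card_le_card hsub
  rw [Finset.card_image_of_injective _ fun _ _ hxy =>
    (S.orderIsoOfFin h).injective (Subtype.ext hxy), Fin.card_Iic] at hc
  exact hc

lemma orderIsoOfFin_le {S : Finset ℕ} {m : ℕ} (h : S.card = m) (i : Fin m) {k : ℕ}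
    (hk : (i : ℕ) + 1 ≤ (S.filter (· ≤ k)).card) : (S.orderIsoOfFin h i : ℕ) ≤ k := by
  by_contra! hlt
  have hsub : S.filter (· ≤ k) ⊆ (Finset.Iio i).image (fun j => (S.orderIsoOfFin h j : ℕ)) := by
    intro x hx
    obtain ⟨hxS, hxk⟩ := Finset.mem_filter.1 hx
    refine Finset.mem_image.2 ⟨(S.orderIsoOfFin h).symm ⟨x, hxS⟩, ?_, by simp⟩
    rw [Finset.mem_Iio, OrderIso.symm_apply_lt]
    exact Subtype.coe_lt_coe.1 (lt_of_le_of_lt hxk hlt)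
  have hc := Finset.card_le_card hsub
  rw [Finset.card_image_of_injective _ fun _ _ hxy =>
    (S.orderIsoOfFin h).injective (Subtype.ext hxy), Fin.card_Iio] at hc
  omega

/-- For `S ∈ Σ(b)` the `i`-th element of `S` is smaller than the `i`-th element of its complement:
otherwise both sets would have at least `i` elements in `[2i - 1]`. -/
lemma orderIsoOfFin_lt_compl {b : ℕ} {S : Finset ℕ} (hS : S ∈ SigmaSet b) (hc : S.card = b)
    (hc' : ((Finset.Icc 1 (2 * b)) \ S).card = b) (i : Fin b) :
    (S.orderIsoOfFin hc i : ℕ) < (((Finset.Icc 1 (2 * b)) \ S).orderIsoOfFin hc' i : ℕ) := by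
  obtain ⟨hsub, _, hi⟩ := hS
  refine lt_of_le_of_lt (hi i) ?_
  by_contra! hle
  have h1 := succ_le_card_filter hc i (hi i)
  have h2 := succ_le_card_filter hc' i hle
  have hdisj : Disjoint (S.filter (· ≤ 2 * (i : ℕ) + 1))
      (((Finset.Icc 1 (2 * b)) \ S).filter (· ≤ 2 * (i : ℕ) + 1)) :=
    Finset.disjoint_filter_filter Finset.disjoint_sdiff
  have h3 : S.filter (· ≤ 2 * (i : ℕ) + 1) ∪
      ((Finset.Icc 1 (2 * b)) \ S).filter (· ≤ 2 * (i : ℕ) + 1)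
      ⊆ Finset.Icc 1 (2 * (i : ℕ) + 1) := by
    intro x hx
    simp only [Finset.mem_union, Finset.mem_filter, Finset.mem_sdiff, Finset.mem_Icc] at hx ⊢
    rcases hx with ⟨hx, hk⟩ | ⟨hx, hk⟩
    · exact ⟨(Finset.mem_Icc.1 (hsub hx)).1, hk⟩
    · exact ⟨hx.1.1, hk⟩
  have h4 := Finset.card_le_card h3
  rw [Finset.card_union_of_disjoint hdisj, Nat.card_Icc] at h4
  omega

lemma insert_mem_SigmaAB {a b x : ℕ} {S : Finset ℕ} (hS : S ∈ SigmaAB a b) (hxS : x ∉ S)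
    (hx : x ∈ Finset.Icc 1 (2 * b)) : insert x S ∈ SigmaAB a (b + 1) := by
  obtain ⟨⟨hsub, hc, hi⟩, ha⟩ := hS
  have hsub' : insert x S ⊆ Finset.Icc 1 (2 * b) := Finset.insert_subset hx hsub
  have hcard : (insert x S).card = b + 1 := by rw [Finset.card_insert_of_notMem hxS, hc]
  refine ⟨⟨hsub'.trans (Finset.Icc_subset_Icc_right (by omega)), hcard, fun i => ?_⟩,
    ha.trans (Finset.subset_insert x S)⟩
  by_cases hib : (i : ℕ) < b
  · refine orderIsoOfFin_le hcard i ?_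
    exact (succ_le_card_filter hc ⟨i, hib⟩ (hi ⟨i, hib⟩)).trans
      (Finset.card_le_card (Finset.filter_subset_filter _ (Finset.subset_insert x S)))
  · have := (Finset.mem_Icc.1 (hsub' ((insert x S).orderIsoOfFin hcard i).2)).2
    omega

/-- The weight of an injection `f`: the sum of the elements of `im f ∩ [2b]`. -/
def imWeight {d n : ℕ} (b : ℕ) (f : ↥(Finset.Icc 1 d) ↪ ↥(Finset.Icc 1 n)) : ℕ :=
  ∑ x ∈ imSet f ∩ Finset.Icc 1 (2 * b), x

lemma mem_imSet {d n : ℕ} {f : ↥(Finset.Icc 1 d) ↪ ↥(Finset.Icc 1 n)} {x : ↥(Finset.Icc 1 n)} :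
    (x : ℕ) ∈ imSet f ↔ ∃ y, f y = x := by
  simp only [imSet, Finset.mem_image, Finset.mem_univ, true_and, Subtype.ext_iff]

lemma imSet_swap {d n : ℕ} {f : ↥(Finset.Icc 1 d) ↪ ↥(Finset.Icc 1 n)}
    {s t : ↥(Finset.Icc 1 n)} (hs : (s : ℕ) ∈ imSet f) (ht : (t : ℕ) ∉ imSet f) :
    imSet (f.trans (Equiv.swap t s).toEmbedding) = insert (t : ℕ) ((imSet f).erase s) := by
  obtain ⟨y, hy⟩ := mem_imSet.1 hs
  have ht' : ∀ z, f z ≠ t := fun z hz => ht (mem_imSet.2 ⟨z, hz⟩)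
  ext x
  simp only [imSet, Finset.mem_image, Finset.mem_univ, true_and, Finset.mem_insert,
    Finset.mem_erase, Function.Embedding.trans_apply, Equiv.coe_toEmbedding]
  constructor
  · rintro ⟨z, rfl⟩
    by_cases hz : f z = s
    · left; rw [hz, Equiv.swap_apply_right]
    · right
      rw [Equiv.swap_apply_of_ne_of_ne (ht' z) hz]
      exact ⟨fun h => hz (Subtype.ext h), z, rfl⟩
  · rintro (rfl | ⟨hx, z, rfl⟩)
    · exact ⟨y, by rw [hy, Equiv.swap_apply_right]⟩
    · exact ⟨z, by rw [Equiv.swap_apply_of_ne_of_ne (ht' z) (fun h => hx (by rw [h]))]⟩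

/-- Replacing the value `s` of an injection by a larger unused value `t ≤ 2b` keeps the size of
`im f ∩ [2b]` and raises its weight. -/
lemma card_weight_swap {d n b : ℕ} {f : ↥(Finset.Icc 1 d) ↪ ↥(Finset.Icc 1 n)}
    {s t : ↥(Finset.Icc 1 n)} (hs : (s : ℕ) ∈ imSet f) (ht : (t : ℕ) ∉ imSet f)
    (hst : (s : ℕ) < t) (htb : (t : ℕ) ≤ 2 * b) :
    (imSet (f.trans (Equiv.swap t s).toEmbedding) ∩ Finset.Icc 1 (2 * b)).card
        = (imSet f ∩ Finset.Icc 1 (2 * b)).card ∧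
      imWeight b f < imWeight b (f.trans (Equiv.swap t s).toEmbedding) := by
  have hs1 := (Finset.mem_Icc.1 s.2).1
  have hsI : (s : ℕ) ∈ imSet f ∩ Finset.Icc 1 (2 * b) :=
    Finset.mem_inter.2 ⟨hs, Finset.mem_Icc.2 ⟨hs1, by omega⟩⟩
  have htI : (t : ℕ) ∉ (imSet f ∩ Finset.Icc 1 (2 * b)).erase s := fun h =>
    ht (Finset.mem_inter.1 (Finset.mem_of_mem_erase h)).1
  have heq : imSet (f.trans (Equiv.swap t s).toEmbedding) ∩ Finset.Icc 1 (2 * b)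
      = insert (t : ℕ) ((imSet f ∩ Finset.Icc 1 (2 * b)).erase s) := by
    rw [imSet_swap hs ht, Finset.insert_inter_of_mem (Finset.mem_Icc.2 ⟨by omega, htb⟩),
      Finset.erase_inter]
  unfold imWeight
  rw [heq]
  constructor
  · rw [Finset.card_insert_of_notMem htI, Finset.card_erase_add_one hsI]
  · rw [Finset.sum_insert htI, ← Finset.add_sum_erase _ (fun x => x) hsI]
    omega

lemma JopF_of {d n : ℕ} (i j : ↥(Finset.Icc 1 n)) (f : ↥(Finset.Icc 1 d) ↪ ↥(Finset.Icc 1 n)) :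
    JopF d n i j (FreeAbelianGroup.of f) = FreeAbelianGroup.of f -
      FreeAbelianGroup.of (f.trans (Equiv.swap i j).toEmbedding) := by
  simp [JopF, permAct, FreeAbelianGroup.map_of_apply]

/-- Expansion of a product of operators `J^{t_i}_{s_i}` over pairs with `s_i < t_i ≤ 2b`, applied to
an injection `f` whose image contains every `s_i` and no `t_i` (so the pairs are disjoint): all
terms other than `f` itself have larger weight. The product is taken over a list `l` of distinct indices, and the terms
still contain `s_i` and avoid `t_i` for every `i ∉ l`; this is what allows induction on `l`. -/
lemma compList_sub_mem {d n b m : ℕ} (s t : Fin m → ↥(Finset.Icc 1 n))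
    (hs : Function.Injective s) (ht : Function.Injective t)
    (hst : ∀ i, (s i : ℕ) < t i) (htb : ∀ i, (t i : ℕ) ≤ 2 * b)
    (f : ↥(Finset.Icc 1 d) ↪ ↥(Finset.Icc 1 n))
    (hsf : ∀ i, (s i : ℕ) ∈ imSet f) (htf : ∀ i, (t i : ℕ) ∉ imSet f)
    (l : List (Fin m)) (hl : l.Nodup) :
    compList (l.map fun i => JopF d n (t i) (s i)) (FreeAbelianGroup.of f)
        - FreeAbelianGroup.of f ∈
      AddSubgroup.closure {y : FInj d n | ∃ g : ↥(Finset.Icc 1 d) ↪ ↥(Finset.Icc 1 n),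
        ((imSet g ∩ Finset.Icc 1 (2 * b)).card = (imSet f ∩ Finset.Icc 1 (2 * b)).card ∧
          imWeight b f < imWeight b g ∧
          ∀ i ∉ l, (s i : ℕ) ∈ imSet g ∧ (t i : ℕ) ∉ imSet g) ∧ y = FreeAbelianGroup.of g} := by
  induction l with
  | nil => simp [compList]
  | cons k l ih =>
    obtain ⟨hkl, hl⟩ := List.nodup_cons.1 hl
    -- swapping `s k` with `t k` does not affect the other pairs
    have key : ∀ g : ↥(Finset.Icc 1 d) ↪ ↥(Finset.Icc 1 n),
        (∀ i ∉ l, (s i : ℕ) ∈ imSet g ∧ (t i : ℕ) ∉ imSet g) → ∀ i ∉ k :: l,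
          (s i : ℕ) ∈ imSet (g.trans (Equiv.swap (t k) (s k)).toEmbedding) ∧
          (t i : ℕ) ∉ imSet (g.trans (Equiv.swap (t k) (s k)).toEmbedding) := by
      intro g hg i hi
      obtain ⟨hik, hil⟩ := not_or.1 (fun h => hi (List.mem_cons.2 h))
      rw [imSet_swap (hg k hkl).1 (hg k hkl).2]
      have h1 : (s i : ℕ) ≠ s k := fun h => hik (hs (Subtype.ext h))
      have h2 : (t i : ℕ) ≠ t k := fun h => hik (ht (Subtype.ext h))
      refine ⟨Finset.mem_insert_of_mem (Finset.mem_erase.2 ⟨h1, (hg i hil).1⟩), fun h => ?_⟩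
      rcases Finset.mem_insert.1 h with h | h
      · exact h2 h
      · exact (hg i hil).2 (Finset.mem_of_mem_erase h)
    have hsplit : compList ((k :: l).map fun i => JopF d n (t i) (s i)) (FreeAbelianGroup.of f)
          - FreeAbelianGroup.of f
        = JopF d n (t k) (s k) (compList (l.map fun i => JopF d n (t i) (s i))
            (FreeAbelianGroup.of f) - FreeAbelianGroup.of f)
          - FreeAbelianGroup.of (f.trans (Equiv.swap (t k) (s k)).toEmbedding) := by
      rw [map_sub, JopF_of]
      simp only [List.map_cons, compList, AddMonoidHom.comp_apply]
      abel
    rw [hsplit]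
    refine AddSubgroup.sub_mem _ ?_ (AddSubgroup.subset_closure ?_)
    · rw [← AddSubgroup.mem_comap]
      refine (AddSubgroup.closure_le _).2 ?_ (ih hl)
      rintro _ ⟨g, ⟨hgc, hgw, hg⟩, rfl⟩
      rw [SetLike.mem_coe, AddSubgroup.mem_comap, JopF_of]
      obtain ⟨hc, hw⟩ := card_weight_swap (hg k hkl).1 (hg k hkl).2 (hst k) (htb k)
      exact AddSubgroup.sub_mem _
        (AddSubgroup.subset_closure
          ⟨g, ⟨hgc, hgw, fun i hi => hg i fun h => hi (List.mem_cons_of_mem k h)⟩, rfl⟩)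
        (AddSubgroup.subset_closure ⟨_, ⟨hc.trans hgc, hgw.trans hw, key g hg⟩, rfl⟩)
    · obtain ⟨hc, hw⟩ := card_weight_swap (hsf k) (htf k) (hst k) (htb k)
      exact ⟨_, ⟨hc, hw, key f fun i _ => ⟨hsf i, htf i⟩⟩, rfl⟩

lemma JSop_sub_mem {d n b : ℕ} {S : Finset ℕ} (hS : S ∈ SigmaSet b) (h2b : 2 * b ≤ n)
    (hc : S.card = b) (hc' : ((Finset.Icc 1 (2 * b)) \ S).card = b)
    (f : ↥(Finset.Icc 1 d) ↪ ↥(Finset.Icc 1 n)) (hf : imSet f ∩ Finset.Icc 1 (2 * b) = S) :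
    JSop d n b S hS.1 h2b hc hc' (FreeAbelianGroup.of f) - FreeAbelianGroup.of f ∈
      AddSubgroup.closure {y : FInj d n | ∃ g : ↥(Finset.Icc 1 d) ↪ ↥(Finset.Icc 1 n),
        ((imSet g ∩ Finset.Icc 1 (2 * b)).card = b ∧ imWeight b f < imWeight b g) ∧
          y = FreeAbelianGroup.of g} := by
  have hsS : ∀ i, (S.orderIsoOfFin hc i : ℕ) ∈ S := fun i => (S.orderIsoOfFin hc i).2
  have htS : ∀ i, (((Finset.Icc 1 (2 * b)) \ S).orderIsoOfFin hc' i : ℕ) ∈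
      (Finset.Icc 1 (2 * b)) \ S := fun i =>
    (((Finset.Icc 1 (2 * b)) \ S).orderIsoOfFin hc' i).2
  unfold JSop
  rw [List.ofFn_eq_map]
  refine AddSubgroup.closure_mono ?_ (compList_sub_mem (b := b)
    (fun i => ⟨(S.orderIsoOfFin hc i : ℕ), ?_⟩)
    (fun i => ⟨(((Finset.Icc 1 (2 * b)) \ S).orderIsoOfFin hc' i : ℕ), ?_⟩)
    ?_ ?_ ?_ ?_ f ?_ ?_ (List.finRange b) (List.nodup_finRange b))
  · rintro _ ⟨g, ⟨hgc, hgw, -⟩, rfl⟩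
    exact ⟨g, ⟨by rw [hgc, hf, hc], hgw⟩, rfl⟩
  · exact Finset.Icc_subset_Icc_right h2b (hS.1 (hsS i))
  · exact Finset.Icc_subset_Icc_right h2b (Finset.mem_sdiff.1 (htS i)).1
  · intro i j hij
    exact (S.orderIsoOfFin hc).injective (Subtype.ext (Subtype.mk.inj hij))
  · intro i j hij
    exact (((Finset.Icc 1 (2 * b)) \ S).orderIsoOfFin hc').injective
      (Subtype.ext (Subtype.mk.inj hij))
  · exact orderIsoOfFin_lt_compl hS hc hc'
  · exact fun i => (Finset.mem_Icc.1 (Finset.mem_sdiff.1 (htS i)).1).2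
  · intro i
    exact (Finset.mem_inter.1 (hf.ge (hsS i))).1
  · intro i h
    have h' := Finset.mem_sdiff.1 (htS i)
    exact h'.2 (hf.le (Finset.mem_inter.2 ⟨h, h'.1⟩))

/-- Every injection with exactly `b` values in `[2b]` lies in the right-hand side, by downward
induction on its weight, which is at most `1 + ⋯ + 2b`. -/
lemma of_mem_of_card_eq {d n a b : ℕ} (h2b : 2 * b ≤ n)
    (f : ↥(Finset.Icc 1 d) ↪ ↥(Finset.Icc 1 n))
    (hf : (imSet f ∩ Finset.Icc 1 (2 * b)).card = b) :
    FreeAbelianGroup.of f ∈ Fab d n a b ⊔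
      AddSubgroup.closure {y | ∃ S : Finset ℕ, ∃ hS : S ∈ SigmaAB a b,
        ∃ hc : S.card = b, ∃ hc' : ((Finset.Icc 1 (2 * b)) \ S).card = b,
        ∃ x ∈ FeqS d n b S, y = JSop d n b S hS.1.1 h2b hc hc' x} := by
  induction hN : (∑ x ∈ Finset.Icc 1 (2 * b), x) - imWeight b f using Nat.strong_induction_on
    generalizing f with
  | _ N ih =>
  by_cases hex : ∃ S ∈ SigmaAB a b, S ⊆ imSet f
  · obtain ⟨S, hS, hSf⟩ := hex
    have hc : S.card = b := hS.1.2.1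
    have hfS : imSet f ∩ Finset.Icc 1 (2 * b) = S :=
      (Finset.eq_of_subset_of_card_le (Finset.subset_inter hSf hS.1.1) (by rw [hf, hc])).symm
    have hc' : ((Finset.Icc 1 (2 * b)) \ S).card = b := by
      rw [Finset.card_sdiff_of_subset hS.1.1, Nat.card_Icc, hc]
      omega
    have hJ := JSop_sub_mem hS.1 h2b hc hc' f hfS
    rw [← sub_sub_cancel (JSop d n b S hS.1.1 h2b hc hc' (FreeAbelianGroup.of f))
      (FreeAbelianGroup.of f)]
    refine AddSubgroup.sub_mem _ (AddSubgroup.mem_sup_right (AddSubgroup.subset_closure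
      ⟨S, hS, hc, hc', _, AddSubgroup.subset_closure ⟨f, hfS, rfl⟩, rfl⟩)) ?_
    refine (AddSubgroup.closure_le _).2 ?_ hJ
    rintro _ ⟨g, ⟨hgc, hgw⟩, rfl⟩
    have hgB : imWeight b g ≤ ∑ x ∈ Finset.Icc 1 (2 * b), x :=
      Finset.sum_le_sum_of_subset Finset.inter_subset_right
    exact ih _ (by omega) g hgc rfl
  · push Not at hex
    exact AddSubgroup.mem_sup_left (AddSubgroup.subset_closure ⟨f, hex, rfl⟩)

/-- **Proposition 3.8** (Church–Ellenberg). For `a ≤ b` with `2b ≤ n`,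
`F^{a,b+1} ⊆ F^{a,b} + Σ_{S ∈ Σ(a,b)} J_S · F_{=S}`. -/
theorem Fab_succ_le (d n a b : ℕ) (hab : a ≤ b) (h2b : 2 * b ≤ n) :
    Fab d n a (b + 1) ≤ Fab d n a b ⊔
      AddSubgroup.closure {y | ∃ S : Finset ℕ, ∃ hS : S ∈ SigmaAB a b,
        ∃ hc : S.card = b, ∃ hc' : ((Finset.Icc 1 (2 * b)) \ S).card = b,
        ∃ x ∈ FeqS d n b S, y = JSop d n b S hS.1.1 h2b hc hc' x} := by
  refine (AddSubgroup.closure_le _).2 ?_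
  rintro _ ⟨f, hf, rfl⟩
  by_cases hex : ∃ S ∈ SigmaAB a b, S ⊆ imSet f
  · obtain ⟨S, hS, hSf⟩ := hex
    refine of_mem_of_card_eq h2b f ?_
    have hST : S ⊆ imSet f ∩ Finset.Icc 1 (2 * b) := Finset.subset_inter hSf hS.1.1
    have hTS : imSet f ∩ Finset.Icc 1 (2 * b) ⊆ S := by
      intro x hx
      by_contra hxS
      obtain ⟨hxf, hxI⟩ := Finset.mem_inter.1 hx
      exact hf _ (insert_mem_SigmaAB hS hxS hxI) (Finset.insert_subset hxf hSf)
    rw [hTS.antisymm hST]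
    exact hS.1.2.1
  · push Not at hex
    exact AddSubgroup.mem_sup_left (AddSubgroup.subset_closure ⟨f, hex, rfl⟩)
end

section
/- Let S ∈ Σ(b) with elements s_1 < ⋯ < s_b. Let U ⊆ [n] be any subset with S ⊆ U, and let u_1 < ⋯ < u_b be b distinct elements of [n]∖U. Let G ≅ (ℤ/2)^b be the subgroup of S_n generated by the commuting transpositions (s_i u_i). Then U is lexicographically first among the subsets {σ·U : σ ∈ G}, where subsets of [n] of equal size are compared by the lexicographic order on their increasing enumerations. -/
/-!
The point is that `s_i < u_i` for every `i` (`sigma_lt`): otherwise `[1, s_i]` contains the `2i`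
distinct numbers `s_1, …, s_i, u_1, …, u_i`, although `s_i ≤ 2i - 1`. An element `σ` of the group
either fixes or interchanges `s_i` and `u_i`, for each `i`, and fixes everything else
(`closure_swap_spec`). So every element that `σ` adds to `U` is some `u_i`, paid for by removing
the smaller `s_i`; hence the least element of the symmetric difference of `U` and `σ U` lies in
`U`, which is the criterion `lex_of_least_diff` for `U` to precede `σ U` lexicographically.
-/

/-- Lexicographic criterion: of two strictly increasing lists, the one that contains the least
element `m` of their symmetric difference comes first, provided it is not the longer one. -/
theorem lex_of_least_diff (m : ℕ) : ∀ l₁ l₂ : List ℕ, l₁.Pairwise (· < ·) →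
    l₂.Pairwise (· < ·) → l₁.length ≤ l₂.length → m ∈ l₁ → m ∉ l₂ →
    (∀ x < m, x ∈ l₁ ↔ x ∈ l₂) → List.Lex (· < ·) l₁ l₂ := by
  intro l₁
  induction l₁ with
  | nil => intro l₂ _ _ _ hm; simp at hm
  | cons a t₁ ih =>
    intro l₂ h₁ h₂ hlen hm hm' hx
    cases l₂ with
    | nil => simp at hlen
    | cons b t₂ =>
      rw [List.pairwise_cons] at h₁ h₂
      have ham : a ≤ m := by
        rcases List.mem_cons.1 hm with h | h
        · exact h.ge
        · exact (h₁.1 m h).le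
      rcases lt_trichotomy a b with hab | rfl | hab
      · exact List.Lex.rel hab
      · have hma : m ≠ a := fun h => hm' (h ▸ List.mem_cons_self)
        refine List.Lex.cons (ih t₂ h₁.2 h₂.2 (by simpa using hlen) ?_ ?_ ?_)
        · exact (List.mem_cons.1 hm).resolve_left hma
        · exact fun h => hm' (List.mem_cons_of_mem _ h)
        · intro x hxm
          have h := hx x hxm
          rw [List.mem_cons, List.mem_cons] at h
          have e₁ := h₁.1 x
          have e₂ := h₂.1 x
          grind
      · -- `b < a ≤ m` would have to occur in the first list, whose least entry is `a`.
        have h := (hx b (by omega)).2 List.mem_cons_self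
        rcases List.mem_cons.1 h with h | h
        · omega
        · have := h₁.1 b h
          omega

/-- The inequality `s_i < u_i`, by counting the elements of `[1, s_i]`. -/
theorem sigma_lt {b : ℕ} (s u : Fin b → ℕ) (hs : StrictMono s) (hu : StrictMono u)
    (hs1 : ∀ i, 1 ≤ s i) (hu1 : ∀ i, 1 ≤ u i) (hsu : ∀ i j, s i ≠ u j)
    (hb : ∀ i : Fin b, s i ≤ 2 * (i : ℕ) + 1) (i : Fin b) : s i < u i := by
  by_contra! h
  have hsub : (Finset.Iic i).image s ∪ (Finset.Iic i).image u ⊆ Finset.Icc 1 (s i) := by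
    intro x hx
    simp only [Finset.mem_union, Finset.mem_image, Finset.mem_Iic] at hx
    rw [Finset.mem_Icc]
    rcases hx with ⟨j, hj, rfl⟩ | ⟨j, hj, rfl⟩
    · exact ⟨hs1 j, hs.monotone hj⟩
    · exact ⟨hu1 j, (hu.monotone hj).trans h⟩
  have hdis : Disjoint ((Finset.Iic i).image s) ((Finset.Iic i).image u) := by
    rw [Finset.disjoint_left]
    intro x hx hx'
    obtain ⟨j, _, rfl⟩ := Finset.mem_image.1 hx
    obtain ⟨k, _, hk⟩ := Finset.mem_image.1 hx'
    exact hsu j k hk.symm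
  have hc := Finset.card_le_card hsub
  rw [Finset.card_union_of_disjoint hdis, Finset.card_image_of_injective _ hs.injective,
    Finset.card_image_of_injective _ hu.injective, Fin.card_Iic, Nat.card_Icc] at hc
  have := hb i
  omega

/-- Each element of the group generated by the disjoint transpositions `(s_i u_i)` fixes or
interchanges `s_i` and `u_i`, for every `i`, and fixes all other points. -/
theorem closure_swap_spec {b : ℕ} (s u : Fin b → ℕ) (hs : s.Injective) (hu : u.Injective)
    (hsu : ∀ i j, s i ≠ u j) (σ : Equiv.Perm ℕ)
    (hσ : σ ∈ Subgroup.closure {τ : Equiv.Perm ℕ | ∃ i : Fin b, τ = Equiv.swap (s i) (u i)}) :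
    (∀ i, (σ (s i) = s i ∧ σ (u i) = u i) ∨ (σ (s i) = u i ∧ σ (u i) = s i)) ∧
      ∀ x, (∀ i, x ≠ s i ∧ x ≠ u i) → σ x = x := by
  induction hσ using Subgroup.closure_induction with
  | mem τ hτ =>
    obtain ⟨i, rfl⟩ := hτ
    refine ⟨fun j => ?_, fun x hx => Equiv.swap_apply_of_ne_of_ne (hx i).1 (hx i).2⟩
    by_cases hij : j = i
    · subst hij
      exact Or.inr ⟨Equiv.swap_apply_left _ _, Equiv.swap_apply_right _ _⟩
    · exact Or.inl ⟨Equiv.swap_apply_of_ne_of_ne (hs.ne hij) (hsu j i),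
        Equiv.swap_apply_of_ne_of_ne (hsu i j).symm (hu.ne hij)⟩
  | one => exact ⟨fun i => Or.inl ⟨rfl, rfl⟩, fun x _ => rfl⟩
  | mul σ τ _ _ h₁ h₂ =>
    refine ⟨fun i => ?_, fun x hx => ?_⟩
    · simp only [Equiv.Perm.mul_apply]
      rcases h₁.1 i with h | h <;> rcases h₂.1 i with h' | h' <;> simp [h, h']
    · rw [Equiv.Perm.mul_apply, h₂.2 x hx, h₁.2 x hx]
  | inv σ _ h =>
    simp only [Equiv.Perm.inv_eq_iff_eq]
    refine ⟨fun i => ?_, fun x hx => (h.2 x hx).symm⟩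
    rcases h.1 i with h | h <;> simp [h]


/-- **Lemma 3.6** (Church–Ellenberg). Let `S ∈ Σ(b)` with elements `s_1 < ⋯ < s_b`,
let `U ⊆ [n]` contain `S`, and let `u_1 < ⋯ < u_b` be distinct elements of `[n] ∖ U`.
Let `G ≅ (ℤ/2)^b` be the subgroup generated by the commuting transpositions
`(s_i u_i)`.  Then `U` is lexicographically first among `{σ·U : σ ∈ G}`, where sets
are compared by the lexicographic order on their increasing enumerations. -/
theorem lex_first_of_sigma (b n : ℕ) (S : Finset ℕ) (hcard : S.card = b)
    (hS : S ∈ SigmaSet b) (U : Finset ℕ) (hU : U ⊆ Finset.Icc 1 n) (hSU : S ⊆ U)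
    (u : Fin b → ℕ) (hmono : StrictMono u)
    (hu : ∀ i : Fin b, u i ∈ Finset.Icc 1 n ∧ u i ∉ U) :
    ∀ σ ∈ Subgroup.closure
      {τ : Equiv.Perm ℕ | ∃ i : Fin b, τ = Equiv.swap ((S.orderIsoOfFin hcard i : ℕ)) (u i)},
      Finset.image (⇑σ) U ≠ U →
        List.Lex (· < ·) (U.sort (· ≤ ·)) ((Finset.image (⇑σ) U).sort (· ≤ ·)) := by
  intro σ hσ hne
  set s : Fin b → ℕ := fun i => (S.orderIsoOfFin hcard i : ℕ) with hs_def
  have hs : StrictMono s := fun i j hij => (S.orderIsoOfFin hcard).strictMono hij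
  have hsS : ∀ i, s i ∈ S := fun i => (S.orderIsoOfFin hcard i).2
  obtain ⟨hS1, _, hb⟩ := hS
  have hsu : ∀ i j, s i ≠ u j := fun i j h => (hu j).2 (h ▸ hSU (hsS i))
  have hlt : ∀ i, s i < u i := sigma_lt s u hs hmono
    (fun i => (Finset.mem_Icc.1 (hS1 (hsS i))).1)
    (fun i => (Finset.mem_Icc.1 (hu i).1).1) hsu hb
  obtain ⟨hpair, hfix⟩ := closure_swap_spec s u hs.injective hmono.injective hsu σ hσ
  have hcardU : (U.image σ).card = U.card := Finset.card_image_of_injective _ σ.injective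
  have hdiff : (U \ U.image σ).Nonempty := by
    rw [Finset.sdiff_nonempty]
    exact fun h => hne (Finset.eq_of_subset_of_card_le h hcardU.le).symm
  -- The least element lost by `U` is the least element of the whole symmetric difference.
  obtain ⟨m, hm, hmin⟩ := Finset.exists_min_image _ id hdiff
  obtain ⟨hmU, hmI⟩ := Finset.mem_sdiff.1 hm
  refine lex_of_least_diff m _ _ (Finset.sortedLT_sort U).pairwise
    (Finset.sortedLT_sort _).pairwise (by simp [hcardU]) (by simpa using hmU)
    (by simpa using hmI) fun x hx => ?_
  rw [Finset.mem_sort, Finset.mem_sort]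
  constructor
  · intro hxU
    by_contra hxI
    exact absurd (hmin x (Finset.mem_sdiff.2 ⟨hxU, hxI⟩)) (not_le.2 hx)
  · intro hxI
    by_contra hxU
    obtain ⟨y, hyU, rfl⟩ := Finset.mem_image.1 hxI
    have hy : ∃ i, y = s i := by
      by_contra! hy
      exact hxU (by rwa [hfix y fun i => ⟨hy i, fun h => (hu i).2 (h ▸ hyU)⟩])
    obtain ⟨i, rfl⟩ := hy
    rcases hpair i with h | h
    · exact hxU (by rwa [h.1])
    · -- `u_i` was added, so `s_i` was lost, and `s_i < u_i < m` contradicts minimality of `m`.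
      have hsI : s i ∉ U.image σ := by
        intro hI
        obtain ⟨z, hzU, hz⟩ := Finset.mem_image.1 hI
        have hzu : z = u i := σ.injective (hz.trans h.2.symm)
        exact (hu i).2 (hzu ▸ hzU)
      have h1 : m ≤ s i := hmin (s i) (Finset.mem_sdiff.2 ⟨hyU, hsI⟩)
      have h2 := hlt i
      rw [h.1] at hx
      omega
end

section
/- Let S be a b-element subset of [2b], with elements s_1 < ⋯ < s_b and complement [2b]∖S with elements t_1 < ⋯ < t_b, and let G ≅ (ℤ/2)^b be the subgroup of S_{2b} generated by the commuting transpositions (s_k t_k). Then S ∈ Σ(b) if and only if S is lexicographically first among the subsets {σ·S : σ ∈ G}, where b-element subsets of [2b] are compared by the lexicographic order on their increasing enumerations. -/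
/-- Of two increasing lists of natural numbers of the same length, the one containing the least
element `a` on which they differ is lexicographically smaller. -/
lemma lex_of_first_diff (a : ℕ) : ∀ l₁ l₂ : List ℕ, l₁.Pairwise (· < ·) → l₂.Pairwise (· < ·) →
    l₁.length = l₂.length → a ∈ l₁ → a ∉ l₂ → (∀ x < a, x ∈ l₁ ↔ x ∈ l₂) →
    List.Lex (· < ·) l₁ l₂
  | [], _, _, _, _, ha, _, _ => by simp at ha
  | _ :: _, [], _, _, hl, _, _, _ => by simp at hl
  | x :: l₁, y :: l₂, h₁, h₂, hl, ha, hna, hx => by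
    rw [List.pairwise_cons] at h₁ h₂
    obtain ⟨h₁x, h₁⟩ := h₁
    obtain ⟨h₂y, h₂⟩ := h₂
    simp only [List.length_cons, add_left_inj] at hl
    simp only [List.mem_cons, not_or] at ha hna hx
    by_cases hxa : a = x
    · subst hxa
      refine List.Lex.rel ?_
      by_contra hlt
      have hya : y < a := by omega
      rcases (hx y hya).2 (Or.inl rfl) with h | h
      · omega
      · have := h₁x y h
        omega
    · have ha' : a ∈ l₁ := ha.resolve_left hxa
      have hlt := h₁x a ha'
      have hxy : x = y := by
        by_contra hne
        have h3 := h₂y x (((hx x hlt).1 (Or.inl rfl)).resolve_left hne)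
        have h4 := h₁x y (((hx y (by omega)).2 (Or.inl rfl)).resolve_left (Ne.symm hne))
        omega
      subst hxy
      refine List.Lex.cons (lex_of_first_diff a l₁ l₂ h₁ h₂ hl ha' hna.2 fun z hz => ?_)
      constructor
      · intro h
        have := h₁x z h
        exact ((hx z hz).1 (Or.inr h)).resolve_left (by omega)
      · intro h
        have := h₂y z h
        exact ((hx z hz).2 (Or.inr h)).resolve_left (by omega)

lemma lex_sort_of_first_diff {A B : Finset ℕ} (hAB : A.card = B.card) {a : ℕ} (hA : a ∈ A)
    (hB : a ∉ B) (h : ∀ x < a, x ∈ A ↔ x ∈ B) :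
    List.Lex (· < ·) (A.sort (· ≤ ·)) (B.sort (· ≤ ·)) :=
  lex_of_first_diff a _ _ A.sortedLT_sort.pairwise B.sortedLT_sort.pairwise (by simpa using hAB)
    (by simpa using hA) (by simpa using hB) (by simpa using h)

/-- With `f` and `g` the increasing enumerations (from index `0`) of a set and of its complement in
`[2b]`, the element `f k` is at most `2k + 1` exactly when it precedes `g k`. -/
lemma enum_le_iff_lt {b : ℕ} {f g : Fin b → ℕ} (hf : StrictMono f) (hg : StrictMono g)
    (hfg : ∀ i j, f i ≠ g j) (hcov : ∀ x, x ∈ Finset.Icc 1 (2 * b) ↔ (∃ i, f i = x) ∨ ∃ i, g i = x)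
    (k : Fin b) : f k ≤ 2 * (k : ℕ) + 1 ↔ f k < g k := by
  have hfm : ∀ i, 1 ≤ f i ∧ f i ≤ 2 * b := fun i =>
    Finset.mem_Icc.1 ((hcov _).2 (Or.inl ⟨i, rfl⟩))
  have hgm : ∀ i, 1 ≤ g i ∧ g i ≤ 2 * b := fun i =>
    Finset.mem_Icc.1 ((hcov _).2 (Or.inr ⟨i, rfl⟩))
  constructor
  · intro hle
    by_contra hlt
    have hgf : g k < f k := by
      have := hfg k k
      omega
    have hsub : (Finset.Iic k).image f ∪ (Finset.Iic k).image g ⊆ Finset.Icc 1 (f k) := by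
      intro x hx
      simp only [Finset.mem_union, Finset.mem_image, Finset.mem_Iic] at hx
      rw [Finset.mem_Icc]
      rcases hx with ⟨i, hi, rfl⟩ | ⟨i, hi, rfl⟩
      · exact ⟨(hfm i).1, hf.monotone hi⟩
      · exact ⟨(hgm i).1, (hg.monotone hi).trans hgf.le⟩
    have hdisj : Disjoint ((Finset.Iic k).image f) ((Finset.Iic k).image g) := by
      rw [Finset.disjoint_left]
      intro x hx hx'
      obtain ⟨i, -, rfl⟩ := Finset.mem_image.1 hx
      obtain ⟨j, -, hj⟩ := Finset.mem_image.1 hx'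
      exact hfg i j hj.symm
    have hc := Finset.card_le_card hsub
    rw [Finset.card_union_of_disjoint hdisj, Finset.card_image_of_injective _ hf.injective,
      Finset.card_image_of_injective _ hg.injective, Fin.card_Iic, Nat.card_Icc] at hc
    omega
  · intro hlt
    have hsub : Finset.Icc 1 (f k) ⊆ (Finset.Iic k).image f ∪ (Finset.Iio k).image g := by
      intro x hx
      rw [Finset.mem_Icc] at hx
      simp only [Finset.mem_union, Finset.mem_image, Finset.mem_Iic, Finset.mem_Iio]
      rcases (hcov x).1 (Finset.mem_Icc.2 ⟨hx.1, hx.2.trans (hfm k).2⟩) with ⟨i, rfl⟩ | ⟨i, rfl⟩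
      · exact Or.inl ⟨i, hf.le_iff_le.1 hx.2, rfl⟩
      · exact Or.inr ⟨i, hg.lt_iff_lt.1 (hx.2.trans_lt hlt), rfl⟩
    have hc := (Finset.card_le_card hsub).trans (Finset.card_union_le _ _)
    rw [Finset.card_image_of_injective _ hf.injective,
      Finset.card_image_of_injective _ hg.injective, Fin.card_Iic, Fin.card_Iio,
      Nat.card_Icc] at hc
    omega

lemma fix_or_swap_of_mem_closure {b : ℕ} {f g : Fin b → ℕ} (hf : f.Injective) (hg : g.Injective)
    (hfg : ∀ i j, f i ≠ g j) {σ : Equiv.Perm ℕ}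
    (hσ : σ ∈ Subgroup.closure {τ | ∃ k, τ = Equiv.swap (f k) (g k)}) (k : Fin b) :
    (σ (f k) = f k ∧ σ (g k) = g k) ∨ (σ (f k) = g k ∧ σ (g k) = f k) := by
  induction hσ using Subgroup.closure_induction with
  | mem τ h =>
    obtain ⟨j, rfl⟩ := h
    by_cases hjk : k = j
    · subst hjk
      simp
    · exact Or.inl ⟨Equiv.swap_apply_of_ne_of_ne (hf.ne hjk) (hfg _ _),
        Equiv.swap_apply_of_ne_of_ne (hfg _ _).symm (hg.ne hjk)⟩
  | one => simp
  | mul σ τ _ _ h₁ h₂ =>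
    rcases h₁ with ⟨h₁, h₁'⟩ | ⟨h₁, h₁'⟩ <;> rcases h₂ with ⟨h₂, h₂'⟩ | ⟨h₂, h₂'⟩ <;>
      simp [h₁, h₁', h₂, h₂']
  | inv σ _ h =>
    simp only [Equiv.Perm.inv_eq_iff_eq]
    rcases h with ⟨h, h'⟩ | ⟨h, h'⟩
    · exact Or.inl ⟨h.symm, h'.symm⟩
    · exact Or.inr ⟨h'.symm, h.symm⟩

/-- The set enumerated by `f` is lexicographically first in its orbit exactly when each `f k` is
smaller than its partner `g k`. -/
lemma forall_lt_iff_lex_first {b : ℕ} {f g : Fin b → ℕ} (hf : StrictMono f) (hg : StrictMono g)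
    (hfg : ∀ i j, f i ≠ g j) {S : Finset ℕ} (hS : ∀ x, x ∈ S ↔ ∃ i, f i = x) :
    (∀ k, f k < g k) ↔
      ∀ σ ∈ Subgroup.closure {τ : Equiv.Perm ℕ | ∃ k, τ = Equiv.swap (f k) (g k)},
        Finset.image (⇑σ) S ≠ S →
          List.Lex (· < ·) (S.sort (· ≤ ·)) ((Finset.image (⇑σ) S).sort (· ≤ ·)) := by
  have him : ∀ (σ : Equiv.Perm ℕ) x, x ∈ S.image σ ↔ ∃ i, σ (f i) = x := by
    intro σ x
    simp [hS]
  have hcard : ∀ σ : Equiv.Perm ℕ, (S.image σ).card = S.card := fun σ =>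
    Finset.card_image_of_injective _ σ.injective
  constructor
  · intro hlt σ hσ hne
    have hfs := fix_or_swap_of_mem_closure hf.injective hg.injective hfg hσ
    have hex : ∃ k, σ (f k) = g k := by
      by_contra! hno
      apply hne
      ext x
      have hfix : ∀ i, σ (f i) = f i := fun i => by
        rcases hfs i with h | h
        · exact h.1
        · exact absurd h.1 (hno i)
      simp [him, hS, hfix]
    obtain ⟨k, hk, hmin⟩ := WellFounded.has_min (wellFounded_lt (α := Fin b))
      {k | σ (f k) = g k} hex
    refine lex_sort_of_first_diff (hcard σ).symm (a := f k) ((hS _).2 ⟨k, rfl⟩) ?_ ?_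
    · rw [him]
      rintro ⟨j, hj⟩
      rcases hfs j with h | h
      · have hjk := hf.injective (h.1.symm.trans hj)
        subst hjk
        exact hfg _ _ (hj.symm.trans hk)
      · exact hfg _ _ (hj.symm.trans h.1)
    · intro x hx
      rw [him, hS]
      constructor
      · rintro ⟨j, rfl⟩
        refine ⟨j, ((hfs j).resolve_right fun h => ?_).1⟩
        exact hmin j h.1 (hf.lt_iff_lt.1 hx)
      · rintro ⟨j, rfl⟩
        rcases hfs j with h | h
        · exact ⟨j, h.1.symm⟩
        · have h1 := hg.monotone (not_lt.1 (hmin j h.1))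
          have h2 := hlt k
          rw [h.1] at hx
          omega
  · intro H k
    by_contra hlt
    have hgf : g k < f k := by
      have := hfg k k
      omega
    have hmem : g k ∈ S.image (Equiv.swap (f k) (g k)) := (him _ _).2 ⟨k, by simp⟩
    have hnot : g k ∉ S := by
      rw [hS]
      rintro ⟨i, hi⟩
      exact hfg _ _ hi
    have h1 := H _ (Subgroup.subset_closure ⟨k, rfl⟩) fun h => hnot (h ▸ hmem)
    have h2 := lex_sort_of_first_diff (hcard (Equiv.swap (f k) (g k))) hmem hnot (by
      intro x hx
      rw [him, hS]
      constructor
      · rintro ⟨j, rfl⟩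
        by_cases hjk : j = k
        · subst hjk
          simp at hx
        · exact ⟨j, (Equiv.swap_apply_of_ne_of_ne (hf.injective.ne hjk) (hfg _ _)).symm⟩
      · rintro ⟨j, rfl⟩
        exact ⟨j, Equiv.swap_apply_of_ne_of_ne (hx.trans hgf).ne (hfg _ _)⟩)
    exact lt_asymm (α := List ℕ) h1 h2

/-- **Equation (3.5)** (Church–Ellenberg). Let `S` be a `b`-element subset of `[2b]`
with elements `s_1 < ⋯ < s_b`, let `t_1 < ⋯ < t_b` be the elements of the complement
`[2b] ∖ S`, and let `G ≅ (ℤ/2)^b` be the subgroup generated by the commuting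
transpositions `(s_k t_k)`.  Then `S ∈ Σ(b)` if and only if `S` is lexicographically
first among `{σ·S : σ ∈ G}`, comparing sets by the lexicographic order on their
increasing enumerations. -/
theorem mem_sigma_iff_lex_first (b : ℕ) (S : Finset ℕ)
    (hsub : S ⊆ Finset.Icc 1 (2 * b)) (hcard : S.card = b)
    (hcard' : ((Finset.Icc 1 (2 * b)) \ S).card = b) :
    S ∈ SigmaSet b ↔
      ∀ σ ∈ Subgroup.closure
        {τ : Equiv.Perm ℕ | ∃ k : Fin b,
          τ = Equiv.swap ((S.orderIsoOfFin hcard k : ℕ))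
            ((((Finset.Icc 1 (2 * b)) \ S).orderIsoOfFin hcard' k : ℕ))},
        Finset.image (⇑σ) S ≠ S →
          List.Lex (· < ·) (S.sort (· ≤ ·)) ((Finset.image (⇑σ) S).sort (· ≤ ·)) := by
  have henum : ∀ (T : Finset ℕ) (hT : T.card = b) (x : ℕ),
      x ∈ T ↔ ∃ i, (T.orderIsoOfFin hT i : ℕ) = x := by
    intro T hT x
    constructor
    · intro hx
      exact ⟨(T.orderIsoOfFin hT).symm ⟨x, hx⟩, by simp⟩
    · rintro ⟨i, rfl⟩
      exact (T.orderIsoOfFin hT i).2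
  have hmono : ∀ (T : Finset ℕ) (hT : T.card = b),
      StrictMono fun i => (T.orderIsoOfFin hT i : ℕ) := fun T hT i j hij =>
    (T.orderIsoOfFin hT).strictMono hij
  have hfg : ∀ i j, (S.orderIsoOfFin hcard i : ℕ) ≠
      ((Finset.Icc 1 (2 * b) \ S).orderIsoOfFin hcard' j : ℕ) := fun i j h =>
    (Finset.mem_sdiff.1 ((Finset.Icc 1 (2 * b) \ S).orderIsoOfFin hcard' j).2).2
      (h ▸ (S.orderIsoOfFin hcard i).2)
  rw [← forall_lt_iff_lex_first (hmono S hcard) (hmono _ hcard') hfg (henum S hcard)]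
  have hcov : ∀ x, x ∈ Finset.Icc 1 (2 * b) ↔ (∃ i, (S.orderIsoOfFin hcard i : ℕ) = x) ∨
      ∃ i, ((Finset.Icc 1 (2 * b) \ S).orderIsoOfFin hcard' i : ℕ) = x := by
    intro x
    rw [← henum S hcard, ← henum _ hcard', Finset.mem_sdiff]
    have := @hsub x
    tauto
  have hkey := enum_le_iff_lt (hmono S hcard) (hmono _ hcard') hfg hcov
  constructor
  · rintro ⟨-, _, hle⟩ k
    exact (hkey k).1 (hle k)
  · intro hlt
    exact ⟨hsub, hcard, fun k => (hkey k).2 (hlt k)⟩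
end

section
/- Let M be a free FI-module generated in degree ≤ k, let V be an arbitrary FI-module generated in degree ≤ d, and let φ : V → M be a morphism of FI-modules. Then the kernel of φ (the sub-FI-module of V given by T ↦ ker(φ_T)) is generated in degree ≤ k + d + 1. -/
/-!
The kernel bound is proved by induction with the *derivative* `D V`, the FI-module
`T ↦ V_{T ⊔ {*}} / V_T`, where `T ⊔ {*}` is `Option T`.

Write `K` for the kernel of `φ : V → M`, and `D φ : D V → D M` for the induced map. Measure degrees
by strict bounds: `M` is free in degrees `< m`, `V` is generated in degree `< e`, and the claim is
that `K` is generated in degree `< m + e`. If `m = 0` then `M = 0` and `K = V`; if `e = 0` then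
`V = 0`. For the step from `(m, e)` to `(m + 1, e + 1)`, `D M` is free in degrees `< m`
(`FreeLT.deriv`) and `D V` is generated in degree `< e` (`genLT_deriv`), so `ker (D φ)` is generated
in degree `< m + e`. Two arguments then finish the proof.

* `ker_deriv_le`: if `|T| ≥ m + e`, every element of `ker (D φ)_T` lifts to `K_{T ⊔ {*}}`. It is
  enough to lift the class of `f_* z`, where `f : S → T` is not surjective, `z ∈ V_{S ⊔ {*}}`
  and `φ z ∈ M_S`. Pick `t ∈ T` outside the image of `f`, and subtract from `f_* z` its
  translate in which `*` is replaced by `t`. The translate lies in `V_T`, so the class is unchanged,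
  and `φ` does not see the difference because `φ z` does not involve `*`.
* `ker_step`: if `|T| ≥ m + e + 1`, then `K_{T ⊔ {*}}` is spanned by the images of `K` on smaller
  sets. Indeed the class of `x ∈ K_{T ⊔ {*}}` is a sum of classes coming from `ker (D φ)_{T - t}`,
  each of which lifts to `K_{(T - t) ⊔ {*}}`. Hence `x` agrees with a sum of images of elements of
  smaller kernels up to an element of `V_T`, and that element is in `K_T` because `M_T → M_{T ⊔ {*}}`
  is injective.

To have `Option` available, the induction is run for functors on all finite types; an FI-module
on finite subsets of `ℤ` extends to all finite types by choosing a copy of each inside `ℤ`.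
-/

/-- An FI-module: a functor from the category of finite sets (modeled as finite
subsets of `ℤ`) and injections to abelian groups. -/
structure FIModule where
  obj : Finset ℤ → Type
  [grp : ∀ T, AddCommGroup (obj T)]
  map : ∀ {S T : Finset ℤ}, (↥S ↪ ↥T) → (obj S →+ obj T)
  map_id : ∀ T : Finset ℤ, map (Function.Embedding.refl ↥T) = AddMonoidHom.id (obj T)
  map_comp : ∀ {S T U : Finset ℤ} (f : ↥S ↪ ↥T) (g : ↥T ↪ ↥U),
    map (f.trans g) = (map g).comp (map f)

attribute [instance] FIModule.grp

/-- The embedding of coercions induced by an inclusion of finite sets. -/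
def inclEmb {S T : Finset ℤ} (h : S ⊆ T) : ↥S ↪ ↥T :=
  ⟨fun x => ⟨x.1, h x.2⟩, fun a b hab => Subtype.ext (by simpa using congrArg Subtype.val hab)⟩

/-- An FI-module is torsion-free if all induced maps are injective. -/
def FIModule.TorsionFree (M : FIModule) : Prop :=
  ∀ {S T : Finset ℤ} (f : ↥S ↪ ↥T), Function.Injective (M.map f)

/-- An FI-module is generated in degree ≤ m if every `V_T` is spanned by the images
of the `V_S` with `|S| ≤ m`. -/
def FIModule.GenLE (V : FIModule) (m : ℕ) : Prop :=
  ∀ T : Finset ℤ, ∀ x : V.obj T,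
    x ∈ AddSubgroup.closure {y : V.obj T |
      ∃ (S : Finset ℤ) (f : ↥S ↪ ↥T) (v : V.obj S), S.card ≤ m ∧ y = V.map f v}

/-- A sub-FI-module of `M`: a subgroup of each `M_T`, compatible with all induced maps. -/
structure FIModule.Sub (M : FIModule) where
  sub : ∀ T : Finset ℤ, AddSubgroup (M.obj T)
  map_mem : ∀ {S T : Finset ℤ} (f : ↥S ↪ ↥T) {x : M.obj S}, x ∈ sub S → M.map f x ∈ sub T

/-- A sub-FI-module is generated in degree ≤ d if each `V_T` is spanned by the images
`f_*(V_S)` with `|S| ≤ d`. -/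
def FIModule.Sub.GenLE {M : FIModule} (V : M.Sub) (d : ℕ) : Prop :=
  ∀ T : Finset ℤ, V.sub T ≤ AddSubgroup.closure {y : M.obj T |
    ∃ (S : Finset ℤ) (f : ↥S ↪ ↥T) (v : M.obj S), S.card ≤ d ∧ v ∈ V.sub S ∧ y = M.map f v}

/-- A morphism of FI-modules: a natural transformation. -/
structure FIHom (M N : FIModule) where
  app : ∀ T : Finset ℤ, M.obj T →+ N.obj T
  natural : ∀ {S T : Finset ℤ} (f : ↥S ↪ ↥T),
    (app T).comp (M.map f) = (N.map f).comp (app S)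

/-- The image of a subset `S ⊆ T` under an embedding `↥T ↪ ↥T'`, as a finite set. -/
def imgUnder {T T' : Finset ℤ} (f : ↥T ↪ ↥T') {S : Finset ℤ} (hS : S ⊆ T) : Finset ℤ :=
  S.attach.image fun x => ((f ⟨x.1, hS x.2⟩ : ↥T') : ℤ)

/-- A free structure on an FI-module `M`, witnessing that `M` is the free FI-module
`M(U)` on an FB-module `U` (with `U_S = c S S`): a decomposition of each `M_T` as an
internal direct sum of summands `c T S` indexed by the subsets `S ⊆ T`, such that
every induced map `f_* : M_T → M_{T'}` is injective and carries the summand `c T S`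
isomorphically onto the summand `c T' (f(S))`. -/
structure FreeStructure (M : FIModule) where
  c : ∀ T : Finset ℤ, Finset ℤ → AddSubgroup (M.obj T)
  eq_bot_of_not_subset : ∀ (T S : Finset ℤ), ¬ S ⊆ T → c T S = ⊥
  indep : ∀ T : Finset ℤ, iSupIndep (c T)
  total : ∀ T : Finset ℤ, (⨆ S : Finset ℤ, c T S) = ⊤
  inj : ∀ {S T : Finset ℤ} (f : ↥S ↪ ↥T), Function.Injective (M.map f)
  map_summand : ∀ {T T' : Finset ℤ} (f : ↥T ↪ ↥T') (S : Finset ℤ) (hS : S ⊆ T),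
    AddSubgroup.map (M.map f) (c T S) = c T' (imgUnder f hS)

/-- A family of subgroups of the `M_T` (e.g. the levelwise kernel of a morphism of
FI-modules) is generated in degree ≤ m if each `W_T` is spanned by the images
`f_*(W_S)` with `|S| ≤ m`. -/
def FamGenLE (M : FIModule) (W : ∀ T : Finset ℤ, AddSubgroup (M.obj T)) (m : ℕ) : Prop :=
  ∀ T : Finset ℤ, W T ≤ AddSubgroup.closure {y : M.obj T |
    ∃ (S : Finset ℤ) (f : ↥S ↪ ↥T) (v : M.obj S), S.card ≤ m ∧ v ∈ W S ∧ y = M.map f v}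

/-! ### FI-modules on finite types -/

/-- An FI-module, with all finite types (rather than the finite subsets of `ℤ`) as objects. -/
structure FIMod where
  obj : (T : Type) → [Finite T] → Type
  [grp : ∀ (T : Type) [Finite T], AddCommGroup (obj T)]
  map : ∀ {S T : Type} [Finite S] [Finite T], (S ↪ T) → (obj S →+ obj T)
  map_id : ∀ (T : Type) [Finite T] (x : obj T), map (Function.Embedding.refl T) x = x
  map_comp : ∀ {S T U : Type} [Finite S] [Finite T] [Finite U] (f : S ↪ T) (g : T ↪ U) (x : obj S),
    map (f.trans g) x = map g (map f x)

attribute [instance] FIMod.grp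

namespace FIMod

/-- A morphism of FI-modules on finite types. -/
structure Hom (V M : FIMod) where
  app : ∀ (T : Type) [Finite T], V.obj T →+ M.obj T
  natural : ∀ {S T : Type} [Finite S] [Finite T] (f : S ↪ T) (x : V.obj S),
    app T (V.map f x) = M.map f (app S x)

/-- The subgroup of `V_T` spanned by the images of the subgroups `W_S` with `|S| < m`. -/
def span (V : FIMod) (W : ∀ (T : Type) [Finite T], AddSubgroup (V.obj T)) (m : ℕ)
    (T : Type) [Finite T] : AddSubgroup (V.obj T) :=
  AddSubgroup.closure {y | ∃ (S : Type) (_ : Finite S) (f : S ↪ T) (v : V.obj S),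
    Nat.card S < m ∧ v ∈ W S ∧ y = V.map f v}

/-- The family `W` is generated in degree `< m`. The strict bound lets `m = 0` mean `W = 0`. -/
def GenLT (V : FIMod) (W : ∀ (T : Type) [Finite T], AddSubgroup (V.obj T)) (m : ℕ) : Prop :=
  ∀ (T : Type) [Finite T], W T ≤ V.span W m T

variable {V M : FIMod}

lemma map_mem_span {W : ∀ (T : Type) [Finite T], AddSubgroup (V.obj T)} {m : ℕ}
    {S T : Type} [Finite S] [Finite T] (f : S ↪ T) {x : V.obj S} (hS : Nat.card S < m)
    (hx : x ∈ W S) : V.map f x ∈ V.span W m T :=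
  AddSubgroup.subset_closure ⟨S, inferInstance, f, x, hS, hx, rfl⟩

lemma span_map {W : ∀ (T : Type) [Finite T], AddSubgroup (V.obj T)} {m : ℕ}
    {S T : Type} [Finite S] [Finite T] (f : S ↪ T) {x : V.obj S} (hx : x ∈ V.span W m S) :
    V.map f x ∈ V.span W m T := by
  have : V.span W m S ≤ (V.span W m T).comap (V.map f) := by
    refine (AddSubgroup.closure_le _).2 ?_
    rintro _ ⟨R, hR, g, v, hc, hv, rfl⟩
    simp only [AddSubgroup.coe_comap, Set.mem_preimage, SetLike.mem_coe]
    rw [← V.map_comp]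
    exact map_mem_span _ hc hv
  exact this hx

lemma span_mono {W : ∀ (T : Type) [Finite T], AddSubgroup (V.obj T)} {m n : ℕ} (h : m ≤ n)
    (T : Type) [Finite T] : V.span W m T ≤ V.span W n T := by
  refine AddSubgroup.closure_mono ?_
  rintro _ ⟨R, hR, g, v, hc, hv, rfl⟩
  exact ⟨R, hR, g, v, by omega, hv, rfl⟩

/-- A family is generated in degree `< m` as soon as, in each cardinality `≥ m`, it is spanned
by images from smaller sets. -/
lemma genLT_of_step {W : ∀ (T : Type) [Finite T], AddSubgroup (V.obj T)} {m : ℕ}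
    (h : ∀ (T : Type) [Finite T], m ≤ Nat.card T → W T ≤ V.span W (Nat.card T) T) :
    V.GenLT W m := by
  suffices H : ∀ n : ℕ, ∀ (T : Type) [Finite T], Nat.card T = n → W T ≤ V.span W m T from
    fun T _ => H _ T rfl
  intro n
  induction n using Nat.strong_induction_on with
  | _ n ih =>
    intro T _ hT
    by_cases hm : m ≤ Nat.card T
    · refine (h T hm).trans ((AddSubgroup.closure_le _).2 ?_)
      rintro _ ⟨R, hR, g, v, hc, hv, rfl⟩
      exact span_map g (ih _ (hT ▸ hc) R rfl hv)
    · intro x hx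
      rw [← V.map_id T x]
      exact map_mem_span _ (by omega) hx

/-- The kernel of a morphism, as a family of subgroups. -/
def Hom.ker (φ : V.Hom M) (T : Type) [Finite T] : AddSubgroup (V.obj T) := (φ.app T).ker

lemma Hom.mem_ker (φ : V.Hom M) {T : Type} [Finite T] {x : V.obj T} :
    x ∈ φ.ker T ↔ φ.app T x = 0 := Iff.rfl

lemma Hom.map_mem_ker (φ : V.Hom M) {S T : Type} [Finite S] [Finite T] (f : S ↪ T) {x : V.obj S}
    (hx : x ∈ φ.ker S) : V.map f x ∈ φ.ker T := by
  rw [φ.mem_ker] at *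
  rw [φ.natural, hx, map_zero]

lemma Hom.span_ker_le (φ : V.Hom M) (m : ℕ) (T : Type) [Finite T] :
    V.span φ.ker m T ≤ φ.ker T := by
  refine (AddSubgroup.closure_le _).2 ?_
  rintro _ ⟨R, hR, g, v, hc, hv, rfl⟩
  exact φ.map_mem_ker g hv

/-! ### The derivative -/

/-- The image of `V_T` in `V_{T ⊔ {*}}`. -/
def base (V : FIMod) (T : Type) [Finite T] : AddSubgroup (V.obj (Option T)) :=
  (V.map Function.Embedding.some).range

lemma some_optionMap {S T : Type} (f : S ↪ T) :
    Function.Embedding.some.trans f.optionMap = f.trans Function.Embedding.some := by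
  ext; simp

lemma base_le (V : FIMod) {S T : Type} [Finite S] [Finite T] (f : S ↪ T) :
    V.base S ≤ (V.base T).comap (V.map f.optionMap) := by
  rintro _ ⟨x, rfl⟩
  refine ⟨V.map f x, ?_⟩
  rw [← V.map_comp, ← V.map_comp, some_optionMap]

/-- The derivative of an FI-module: `(D V)_T = V_{T ⊔ {*}} / V_T`. -/
def deriv (V : FIMod) : FIMod where
  obj T _ := V.obj (Option T) ⧸ V.base T
  map f := QuotientAddGroup.map _ _ (V.map f.optionMap) (V.base_le f)
  map_id T _ x := by
    induction x using QuotientAddGroup.induction_on with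
    | H x =>
      have : (Function.Embedding.refl T).optionMap = Function.Embedding.refl (Option T) := by
        ext x; cases x <;> simp
      rw [QuotientAddGroup.map_mk, this, V.map_id]
  map_comp f g x := by
    induction x using QuotientAddGroup.induction_on with
    | H x =>
      have : (f.trans g).optionMap = f.optionMap.trans g.optionMap := by
        ext x; cases x <;> simp
      rw [QuotientAddGroup.map_mk, QuotientAddGroup.map_mk, QuotientAddGroup.map_mk, this,
        V.map_comp]

/-- The quotient map `V_{T ⊔ {*}} → (D V)_T`. -/
def proj (V : FIMod) (T : Type) [Finite T] : V.obj (Option T) →+ V.deriv.obj T :=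
  QuotientAddGroup.mk' (V.base T)

lemma proj_surj (V : FIMod) (T : Type) [Finite T] : Function.Surjective (V.proj T) :=
  QuotientAddGroup.mk'_surjective _

lemma ker_proj (V : FIMod) (T : Type) [Finite T] : (V.proj T).ker = V.base T :=
  QuotientAddGroup.ker_mk' _

lemma proj_eq_zero {T : Type} [Finite T] {x : V.obj (Option T)} :
    V.proj T x = 0 ↔ ∃ y, V.map Function.Embedding.some y = x := by
  rw [← AddMonoidHom.mem_ker, ker_proj]; rfl

lemma deriv_map_proj {S T : Type} [Finite S] [Finite T] (f : S ↪ T) (x : V.obj (Option S)) :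
    V.deriv.map f (V.proj S x) = V.proj T (V.map f.optionMap x) := rfl

/-- The morphism `D φ : D V → D M` induced by `φ`. -/
def Hom.deriv (φ : V.Hom M) : V.deriv.Hom M.deriv where
  app T _ := QuotientAddGroup.map _ _ (φ.app (Option T)) (by
    rintro _ ⟨x, rfl⟩
    exact ⟨φ.app T x, (φ.natural _ _).symm⟩)
  natural f x := by
    obtain ⟨x, rfl⟩ := V.proj_surj _ x
    exact congrArg (M.proj _) (φ.natural f.optionMap x)

lemma Hom.deriv_proj (φ : V.Hom M) {T : Type} [Finite T] (x : V.obj (Option T)) :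
    φ.deriv.app T (V.proj T x) = M.proj T (φ.app _ x) := rfl

/-- The derivative lowers the generation degree by one. A generator `g_* v`, `g : S → T ⊔ {*}`,
dies in `D V` if `*` is not in the image of `g`; otherwise `S = S' ⊔ {*}` and `g` comes from an
injection `S' → T`. -/
lemma genLT_deriv {e : ℕ} (h : V.GenLT (fun _ _ => ⊤) (e + 1)) :
    V.deriv.GenLT (fun _ _ => ⊤) e := by
  intro T _ x _
  obtain ⟨x, rfl⟩ := V.proj_surj _ x
  have key : V.span (fun _ _ => ⊤) (e + 1) (Option T) ≤
      (V.deriv.span (fun _ _ => ⊤) e T).comap (V.proj T) := by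
    refine (AddSubgroup.closure_le _).2 ?_
    rintro _ ⟨S, hS, g, v, hc, -, rfl⟩
    simp only [AddSubgroup.coe_comap, Set.mem_preimage, SetLike.mem_coe]
    by_cases hg : ∃ s, g s = none
    · obtain ⟨s, hs⟩ := hg
      classical
      let E : Option {a : S // a ≠ s} ≃ S := Equiv.optionSubtypeNe s
      have hne (a : {a : S // a ≠ s}) : (g a.1).isSome := by
        rw [Option.isSome_iff_ne_none, ← hs]
        exact fun h => a.2 (g.injective h)
      let f : {a : S // a ≠ s} ↪ T := ⟨fun a => (g a.1).get (hne a), fun a b hab => by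
        exact Subtype.ext (g.injective (Option.get_inj.1 hab))⟩
      have hfac : E.symm.toEmbedding.trans f.optionMap = g := by
        refine Function.Embedding.ext fun a => ?_
        obtain ⟨a, rfl⟩ := E.surjective a
        cases a with
        | none => simp [E, hs]
        | some a =>
          rw [Function.Embedding.trans_apply, Equiv.coe_toEmbedding, E.symm_apply_apply]
          exact Option.some_get (hne a)
      rw [← hfac, V.map_comp, ← deriv_map_proj]
      refine map_mem_span _ ?_ trivial
      have := Nat.card_congr E
      rw [Finite.card_option] at this
      omega
    · push Not at hg
      have hne (a : S) : (g a).isSome := Option.isSome_iff_ne_none.2 (hg a)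
      let f : S ↪ T := ⟨fun a => (g a).get (hne a), fun a b hab => g.injective
        (Option.get_inj.1 hab)⟩
      have hfac : f.trans Function.Embedding.some = g :=
        Function.Embedding.ext fun a => Option.some_get (hne a)
      rw [← hfac, V.map_comp, proj_eq_zero.2 ⟨_, rfl⟩]
      exact zero_mem _
  exact key (h _ trivial)

/-! ### Free FI-modules -/

/-- A free structure on `M` concentrated in degrees `< m`: a decomposition of each `M_T` into
summands indexed by the subsets of `T`, as in `FreeStructure`, with zero summands for the subsets
of cardinality `≥ m`. -/
structure FreeLT (M : FIMod) (m : ℕ) where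
  c : ∀ (T : Type) [Finite T], Set T → AddSubgroup (M.obj T)
  indep : ∀ (T : Type) [Finite T], iSupIndep (c T)
  total : ∀ (T : Type) [Finite T], (⨆ S : Set T, c T S) = ⊤
  inj : ∀ {S T : Type} [Finite S] [Finite T] (f : S ↪ T), Function.Injective (M.map f)
  map_summand : ∀ {T T' : Type} [Finite T] [Finite T'] (f : T ↪ T') (S : Set T),
    (c T S).map (M.map f) = c T' (f '' S)
  deg : ∀ (T : Type) [Finite T] (S : Set T), m ≤ S.ncard → c T S = ⊥

/-- The image of `M_T` in `M_{T ⊔ {*}}` is the sum of the summands of the subsets not containing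
`*`. -/
lemma FreeLT.base_eq {m : ℕ} (F : M.FreeLT m) (T : Type) [Finite T] :
    M.base T = ⨆ A ∈ {A : Set (Option T) | none ∉ A}, F.c (Option T) A := by
  rw [base, AddMonoidHom.range_eq_map, ← F.total T, AddSubgroup.map_iSup]
  apply le_antisymm
  · refine iSup_le fun S => ?_
    rw [F.map_summand]
    exact le_iSup₂_of_le (Function.Embedding.some '' S) (by simp) le_rfl
  · refine iSup₂_le fun A hA => ?_
    have : A = Function.Embedding.some '' (some ⁻¹' A) := by
      ext x
      cases x with
      | none => simpa using hA
      | some x => simp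
    rw [this, ← F.map_summand]
    exact le_iSup (fun S => (F.c T S).map (M.map Function.Embedding.some)) _

/-- `M_{T ⊔ {*}}` is spanned by the summands of the subsets containing `*` together with `M_T`. -/
lemma FreeLT.sup_eq_top {m : ℕ} (F : M.FreeLT m) (T : Type) [Finite T] :
    (⨆ A ∈ {A : Set (Option T) | none ∈ A}, F.c (Option T) A) ⊔ M.base T = ⊤ := by
  rw [eq_top_iff, ← F.total (Option T), F.base_eq]
  refine iSup_le fun A => ?_
  by_cases hA : none ∈ A
  · exact le_sup_of_le_left (le_iSup₂_of_le A hA le_rfl)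
  · exact le_sup_of_le_right (le_iSup₂_of_le A hA le_rfl)

/-- A subset `S` of `T`, with the extra point adjoined. -/
def addPt {T : Type} (S : Set T) : Set (Option T) := insert none (some '' S)

lemma addPt_inj {T : Type} : Function.Injective (addPt (T := T)) := by
  intro A B h
  ext x
  have := Set.ext_iff.1 h (some x)
  simpa [addPt] using this

/-- The derivative of a free FI-module in degrees `< m + 1` is free in degrees `< m`: the summand
of `S` in `(D M)_T` is the image of the summand of `S ⊔ {*}` in `M_{T ⊔ {*}}`. -/
def FreeLT.deriv {m : ℕ} (F : M.FreeLT (m + 1)) : M.deriv.FreeLT m where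
  c T _ S := (F.c (Option T) (addPt S)).map (M.proj T)
  indep T _ := by
    intro S
    rw [AddSubgroup.disjoint_def]
    rintro _ ⟨a, ha, rfl⟩ hx
    have h1 : (⨆ S', ⨆ (_ : S' ≠ S), (F.c (Option T) (addPt S')).map (M.proj T)) ≤
        (⨆ A, ⨆ (_ : A ≠ addPt S), F.c (Option T) A).map (M.proj T) := by
      refine iSup₂_le fun S' hS' => AddSubgroup.map_mono ?_
      exact le_iSup₂_of_le (addPt S') (addPt_inj.ne hS') le_rfl
    obtain ⟨b, hb, hab⟩ := h1 hx
    have hker : a - b ∈ M.base T := by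
      rw [← ker_proj, AddMonoidHom.mem_ker, map_sub, hab, sub_self]
    have h2 : M.base T ≤ ⨆ A, ⨆ (_ : A ≠ addPt S), F.c (Option T) A := by
      rw [F.base_eq]
      refine iSup₂_le fun A hA => le_iSup₂_of_le A ?_ le_rfl
      rintro rfl
      exact hA (by simp [addPt])
    have h3 := add_mem (h2 hker) hb
    rw [sub_add_cancel] at h3
    rw [(AddSubgroup.disjoint_def.1 (F.indep (Option T) (addPt S))) ha h3, map_zero]
  total T _ := by
    rw [eq_top_iff]
    rintro x -
    obtain ⟨x, rfl⟩ := M.proj_surj _ x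
    have hx : x ∈ (⨆ A ∈ {A : Set (Option T) | none ∈ A}, F.c (Option T) A) ⊔ M.base T := by
      rw [F.sup_eq_top]; trivial
    obtain ⟨a, ha, b, hb, rfl⟩ := AddSubgroup.mem_sup.1 hx
    rw [map_add, show M.proj T b = 0 by rwa [← AddMonoidHom.mem_ker, ker_proj], add_zero]
    have h1 : (⨆ A ∈ {A : Set (Option T) | none ∈ A}, F.c (Option T) A).map (M.proj T) ≤
        ⨆ S, (F.c (Option T) (addPt S)).map (M.proj T) := by
      simp only [AddSubgroup.map_iSup]
      refine iSup₂_le fun A hA => ?_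
      have : A = addPt (some ⁻¹' A) := by
        ext x
        cases x with
        | none => simpa [addPt] using hA
        | some x => simp [addPt]
      rw [this]
      exact le_iSup (fun S => (F.c (Option T) (addPt S)).map (M.proj T)) _
    exact h1 ⟨a, ha, rfl⟩
  inj {S T} _ _ f := by
    rw [injective_iff_map_eq_zero]
    intro x hx
    obtain ⟨x, rfl⟩ := M.proj_surj _ x
    have hx' : x ∈ (⨆ A ∈ {A : Set (Option S) | none ∈ A}, F.c (Option S) A) ⊔ M.base S := by
      rw [F.sup_eq_top]; trivial
    obtain ⟨a, ha, b, hb, rfl⟩ := AddSubgroup.mem_sup.1 hx'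
    have hb0 : M.proj S b = 0 := by rwa [← AddMonoidHom.mem_ker, ker_proj]
    rw [map_add, hb0, add_zero] at hx ⊢
    rw [deriv_map_proj, ← AddMonoidHom.mem_ker, ker_proj, F.base_eq] at hx
    have h1 : (⨆ A ∈ {A : Set (Option S) | none ∈ A}, F.c (Option S) A).map
        (M.map f.optionMap) ≤ ⨆ A ∈ {A : Set (Option T) | none ∈ A}, F.c (Option T) A := by
      simp only [AddSubgroup.map_iSup]
      refine iSup₂_le fun A hA => ?_
      rw [F.map_summand]
      exact le_iSup₂_of_le (f.optionMap '' A) ⟨none, hA, by simp⟩ le_rfl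
    have hdisj := (F.indep (Option T)).disjoint_biSup_biSup'
      (s := {A : Set (Option T) | none ∈ A}) (t := {A : Set (Option T) | none ∉ A})
      (Set.disjoint_left.2 fun A h h' => h' h) (Set.toFinite _)
    have h0 := AddSubgroup.disjoint_def.1 hdisj (h1 ⟨a, ha, rfl⟩) hx
    rw [← map_zero (M.map f.optionMap)] at h0
    rw [F.inj _ h0, map_zero]
  map_summand {T T'} _ _ f S := by
    have h1 : addPt (f '' S) = f.optionMap '' addPt S := by
      ext x
      cases x <;> simp [addPt]
    rw [h1, ← F.map_summand, AddSubgroup.map_map, AddSubgroup.map_map]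
    rfl
  deg T _ S hS := by
    rw [F.deg, AddSubgroup.map_bot]
    rw [addPt, Set.ncard_insert_of_notMem (by simp), Set.ncard_image_of_injective _
      (Option.some_injective _)]
    omega

lemma FreeLT.eq_zero (F : M.FreeLT 0) {T : Type} [Finite T] (x : M.obj T) : x = 0 := by
  have h : (⊤ : AddSubgroup (M.obj T)) = ⊥ := by
    rw [← F.total T]
    exact iSup_eq_bot.2 fun S => F.deg T S (Nat.zero_le _)
  exact AddSubgroup.mem_bot.1 (h ▸ AddSubgroup.mem_top x)

/-! ### The kernel bound -/

lemma exists_notMem_range {S T : Type} [Finite S] [Finite T] (f : S ↪ T)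
    (h : Nat.card S < Nat.card T) : ∃ t, ∀ s, f s ≠ t := by
  by_contra! H
  exact absurd (Nat.card_le_card_of_surjective f H) (by omega)

/-- In large degrees, `ker (D φ)_T` lifts to `K_{T ⊔ {*}}`. -/
lemma ker_deriv_le (φ : V.Hom M) {n : ℕ} (h : V.deriv.GenLT φ.deriv.ker n)
    (T : Type) [Finite T] (hT : n ≤ Nat.card T) :
    φ.deriv.ker T ≤ (φ.ker (Option T)).map (V.proj T) := by
  refine (h T).trans ((AddSubgroup.closure_le _).2 ?_)
  rintro _ ⟨S, hS, f, w, hc, hw, rfl⟩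
  obtain ⟨z, rfl⟩ := V.proj_surj _ w
  obtain ⟨t, ht⟩ := exists_notMem_range f (hc.trans_le hT)
  rw [φ.deriv.mem_ker, φ.deriv_proj, proj_eq_zero] at hw
  obtain ⟨y, hy⟩ := hw
  -- `g` extends `f` to `S ⊔ {*}` by sending `*` to `t`.
  let g : Option S ↪ T := f.optionElim t (by rintro ⟨s, hs⟩; exact ht s hs)
  refine ⟨V.map f.optionMap z - V.map Function.Embedding.some (V.map g z), ?_, ?_⟩
  · simp only [SetLike.mem_coe]
    have hg : Function.Embedding.some.trans f.optionMap =
        (Function.Embedding.some.trans g).trans Function.Embedding.some := by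
      ext; simp [g]
    rw [φ.mem_ker, map_sub, φ.natural, φ.natural, φ.natural, ← hy, ← M.map_comp, ← M.map_comp,
      ← M.map_comp, hg]
    exact sub_self _
  · rw [map_sub, proj_eq_zero.2 ⟨V.map g z, rfl⟩, sub_zero, deriv_map_proj]

/-- In large degrees, `K_{T ⊔ {*}}` is spanned by the images of `K` on smaller sets. -/
lemma ker_step (φ : V.Hom M)
    (hinj : ∀ (T : Type) [Finite T], Function.Injective (M.map (Function.Embedding.some (α := T))))
    {n : ℕ} (h : V.deriv.GenLT φ.deriv.ker n) (T : Type) [Finite T] (hT : n + 1 ≤ Nat.card T) :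
    φ.ker (Option T) ≤ V.span φ.ker (Nat.card (Option T)) (Option T) := by
  intro x hx
  have hx' : V.proj T x ∈ φ.deriv.ker T := by
    rw [φ.deriv.mem_ker, φ.deriv_proj, φ.mem_ker.1 hx, map_zero]
  have key : V.deriv.span φ.deriv.ker n T ≤
      (V.span φ.ker (Nat.card (Option T)) (Option T)).map (V.proj T) := by
    refine (AddSubgroup.closure_le _).2 ?_
    rintro _ ⟨S, hS, f, w, hc, hw, rfl⟩
    obtain ⟨t, ht⟩ := exists_notMem_range f (by omega)
    -- Factor `f` through `T - t`, which is large enough for `ker_deriv_le` to apply.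
    let f₁ : S ↪ {a : T // a ≠ t} := ⟨fun s => ⟨f s, ht s⟩, fun a b hab => by simpa using hab⟩
    let f₂ : {a : T // a ≠ t} ↪ T := Function.Embedding.subtype _
    have hf : f = f₁.trans f₂ := rfl
    have hcard : Nat.card T = Nat.card {a : T // a ≠ t} + 1 := by
      classical
      rw [← Finite.card_option, Nat.card_congr (Equiv.optionSubtypeNe t)]
    obtain ⟨z, hz, hzw⟩ := ker_deriv_le φ h {a : T // a ≠ t} (by omega)
      (φ.deriv.map_mem_ker f₁ hw)
    refine ⟨V.map f₂.optionMap z, map_mem_span _ ?_ hz, ?_⟩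
    · rw [Finite.card_option, Finite.card_option]; omega
    · rw [← deriv_map_proj, hzw, hf, V.deriv.map_comp]
  obtain ⟨y, hy, hyx⟩ := key (h T hx')
  have hsub : V.proj T (x - y) = 0 := by rw [map_sub, hyx, sub_self]
  obtain ⟨v, hv⟩ := proj_eq_zero.1 hsub
  have hvK : v ∈ φ.ker T := by
    have hxy : x - y ∈ φ.ker (Option T) := sub_mem hx (φ.span_ker_le _ _ hy)
    rw [← hv, φ.mem_ker, φ.natural] at hxy
    exact hinj T (hxy.trans (map_zero _).symm)
  rw [← sub_add_cancel x y, ← hv]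
  refine add_mem (map_mem_span _ ?_ hvK) hy
  rw [Finite.card_option]; omega

theorem ker_genLT (m e : ℕ) {V M : FIMod} (F : M.FreeLT m) (hV : V.GenLT (fun _ _ => ⊤) e)
    (φ : V.Hom M) : V.GenLT φ.ker (m + e) := by
  induction m generalizing e V M with
  | zero =>
    intro T _ x _
    have hker : φ.ker = fun _ _ => ⊤ := by
      funext T _
      exact eq_top_iff.2 fun x _ => F.eq_zero _
    rw [hker]
    exact span_mono (by omega) T (hV T trivial)
  | succ m ih =>
    cases e with
    | zero =>
      intro T _ x _
      have hx := hV T (x := x) trivial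
      have h0 : V.span (fun _ _ => ⊤) 0 T ≤ ⊥ := by
        refine (AddSubgroup.closure_le _).2 ?_
        rintro _ ⟨S, hS, g, v, hc, -⟩
        exact absurd hc (Nat.not_lt_zero _)
      rw [AddSubgroup.mem_bot.1 (h0 hx)]
      exact zero_mem _
    | succ e =>
      have hD := ih e F.deriv (genLT_deriv hV) φ.deriv
      refine genLT_of_step fun T _ hT => ?_
      have : Nonempty T := (Nat.card_pos_iff.1 (by omega)).1
      obtain ⟨t⟩ := this
      classical
      let E : Option {a : T // a ≠ t} ≃ T := Equiv.optionSubtypeNe t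
      have hE := Nat.card_congr E
      intro x hx
      have h1 := ker_step φ (fun T _ => F.inj _) hD {a : T // a ≠ t}
        (by rw [Finite.card_option] at hE; omega)
        (φ.map_mem_ker E.symm.toEmbedding hx)
      have h2 := span_map E.toEmbedding h1
      rw [← V.map_comp, hE] at h2
      have h3 : E.symm.toEmbedding.trans E.toEmbedding = Function.Embedding.refl T := by
        ext; simp
      rwa [h3, V.map_id] at h2

end FIMod

/-! ### Extension from finite subsets of `ℤ` to finite types -/

lemma exists_copy (T : Type) [Finite T] : ∃ E : Finset ℤ, Nonempty (T ≃ ↥E) := by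
  obtain ⟨E, hE⟩ := Infinite.exists_subset_card_eq ℤ (Nat.card T)
  exact ⟨E, ⟨(Finite.equivFin T).trans (E.equivFinOfCardEq hE).symm⟩⟩

/-- A chosen copy in `ℤ` of the finite type `T`. -/
noncomputable def copy (T : Type) [Finite T] : Finset ℤ := (exists_copy T).choose

/-- The chosen bijection of `T` with its copy in `ℤ`. -/
noncomputable def copyEquiv (T : Type) [Finite T] : T ≃ ↥(copy T) :=
  (exists_copy T).choose_spec.some

lemma card_copy (T : Type) [Finite T] : (copy T).card = Nat.card T := by
  rw [Nat.card_congr (copyEquiv T), Nat.card_eq_fintype_card, Fintype.card_coe]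

/-- The injection between the copies in `ℤ` induced by an injection of finite types. -/
noncomputable def copyMap {S T : Type} [Finite S] [Finite T] (f : S ↪ T) :
    ↥(copy S) ↪ ↥(copy T) :=
  ((copyEquiv S).symm.toEmbedding.trans f).trans (copyEquiv T).toEmbedding

namespace FIModule

lemma map_refl_apply (V : FIModule) {T : Finset ℤ} (x : V.obj T) :
    V.map (Function.Embedding.refl ↥T) x = x := by
  rw [V.map_id]; rfl

lemma map_trans_apply (V : FIModule) {S T U : Finset ℤ} (f : ↥S ↪ ↥T) (g : ↥T ↪ ↥U)
    (x : V.obj S) : V.map (f.trans g) x = V.map g (V.map f x) := by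
  rw [V.map_comp]; rfl

/-- The extension of an FI-module to all finite types. -/
noncomputable def ext (V : FIModule) : FIMod where
  obj T _ := V.obj (copy T)
  map f := V.map (copyMap f)
  map_id T _ x := by
    have : copyMap (Function.Embedding.refl T) = Function.Embedding.refl _ := by
      ext; simp [copyMap]
    rw [this, V.map_refl_apply]
  map_comp f g x := by
    have : copyMap (f.trans g) = (copyMap f).trans (copyMap g) := by
      ext; simp [copyMap]
    rw [this, V.map_trans_apply]

lemma genLT_ext {V : FIModule} {d : ℕ} (h : V.GenLE d) : V.ext.GenLT (fun _ _ => ⊤) (d + 1) := by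
  intro T _ x _
  refine (AddSubgroup.closure_le _).2 ?_ (h (copy T) x)
  rintro _ ⟨S, f, v, hc, rfl⟩
  let f' : ↥S ↪ T := f.trans (copyEquiv T).symm.toEmbedding
  have hf : f = (copyEquiv ↥S).toEmbedding.trans (copyMap f') := by
    ext; simp [copyMap, f']
  rw [hf, V.map_trans_apply]
  refine FIMod.map_mem_span (V := V.ext) (W := fun _ _ => ⊤) f' ?_ trivial
  rw [Nat.card_eq_fintype_card, Fintype.card_coe]
  omega

end FIModule

/-- The extension of a morphism to all finite types. -/
noncomputable def FIHom.ext {V M : FIModule} (φ : FIHom V M) : V.ext.Hom M.ext where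
  app T _ := φ.app (copy T)
  natural f x := DFunLike.congr_fun (φ.natural (copyMap f)) x

lemma card_imgUnder_le {T T' : Finset ℤ} (f : ↥T ↪ ↥T') {S : Finset ℤ} (hS : S ⊆ T) :
    (imgUnder f hS).card ≤ S.card :=
  Finset.card_image_le.trans (Finset.card_attach).le

/-- If a free FI-module is generated in degree `≤ k`, its summands indexed by subsets of cardinality
`> k` vanish: the other summands span everything, and the sum is direct. -/
lemma FreeStructure.eq_bot_of_lt {M : FIModule} (F : FreeStructure M) {k : ℕ} (h : M.GenLE k)
    (T S : Finset ℤ) (hS : k < S.card) : F.c T S = ⊥ := by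
  have htop : (⊤ : AddSubgroup (M.obj T)) ≤ ⨆ A, ⨆ (_ : A ≠ S), F.c T A := by
    rintro x -
    refine (AddSubgroup.closure_le _).2 ?_ (h T x)
    rintro _ ⟨R, f, v, hc, rfl⟩
    have h1 : (⨆ A, F.c R A).map (M.map f) ≤ ⨆ A, ⨆ (_ : A ≠ S), F.c T A := by
      rw [AddSubgroup.map_iSup]
      refine iSup_le fun A => ?_
      by_cases hA : A ⊆ R
      · rw [F.map_summand f A hA]
        refine le_iSup₂_of_le (imgUnder f hA) ?_ le_rfl
        rintro rfl
        have := card_imgUnder_le f hA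
        have := Finset.card_le_card hA
        omega
      · rw [F.eq_bot_of_not_subset R A hA, AddSubgroup.map_bot]
        exact bot_le
    rw [F.total] at h1
    exact h1 ⟨v, trivial, rfl⟩
  exact le_bot_iff.1 ((F.indep T S) le_rfl (le_top.trans htop))

/-- The copy in `ℤ` of a subset of a finite type. -/
noncomputable def copySet {T : Type} [Finite T] (S : Set T) : Finset ℤ :=
  ((Set.toFinite S).image fun x => ((copyEquiv T x : ↥(copy T)) : ℤ)).toFinset

lemma mem_copySet {T : Type} [Finite T] {S : Set T} {a : ℤ} :
    a ∈ copySet S ↔ ∃ x ∈ S, ((copyEquiv T x : ↥(copy T)) : ℤ) = a := by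
  simp [copySet]

lemma copySet_subset {T : Type} [Finite T] (S : Set T) : copySet S ⊆ copy T := by
  intro a ha
  obtain ⟨x, -, rfl⟩ := mem_copySet.1 ha
  exact (copyEquiv T x).2

lemma coe_copyEquiv_inj {T : Type} [Finite T] :
    Function.Injective fun x => ((copyEquiv T x : ↥(copy T)) : ℤ) :=
  Subtype.val_injective.comp (copyEquiv T).injective

lemma copySet_inj {T : Type} [Finite T] : Function.Injective (copySet (T := T)) := by
  intro A B h
  have h' := congrArg (fun X : Finset ℤ => (X : Set ℤ)) h
  simp only [copySet, Set.Finite.coe_toFinset] at h'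
  exact coe_copyEquiv_inj.image_injective h'

lemma card_copySet {T : Type} [Finite T] (S : Set T) : (copySet S).card = S.ncard := by
  rw [copySet, ← Set.ncard_eq_toFinset_card _ (Set.toFinite _), Set.ncard_image_of_injective _ coe_copyEquiv_inj]

lemma exists_copySet {T : Type} [Finite T] {A : Finset ℤ} (hA : A ⊆ copy T) :
    ∃ S : Set T, copySet S = A := by
  refine ⟨{x | ((copyEquiv T x : ↥(copy T)) : ℤ) ∈ A}, ?_⟩
  ext a
  rw [mem_copySet]
  constructor
  · rintro ⟨x, hx, rfl⟩
    exact hx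
  · intro ha
    exact ⟨(copyEquiv T).symm ⟨a, hA ha⟩, by simpa using ha, by simp⟩

/-- The extension to all finite types of a free FI-module generated in degree `≤ k` is free in
degrees `< k + 1`. -/
noncomputable def FreeStructure.ext {M : FIModule} (F : FreeStructure M) {k : ℕ} (h : M.GenLE k) :
    M.ext.FreeLT (k + 1) where
  c T _ S := F.c (copy T) (copySet S)
  indep T _ := (F.indep (copy T)).comp copySet_inj
  total T _ := by
    rw [eq_top_iff]
    refine (F.total (copy T)).ge.trans (iSup_le fun A => ?_)
    by_cases hA : A ⊆ copy T
    · obtain ⟨S, rfl⟩ := exists_copySet hA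
      exact le_iSup (fun S : Set T => F.c (copy T) (copySet S)) S
    · rw [F.eq_bot_of_not_subset _ _ hA]
      exact bot_le
  inj f := F.inj (copyMap f)
  map_summand {T T'} _ _ f S := by
    refine (F.map_summand (copyMap f) (copySet S) (copySet_subset S)).trans ?_
    congr 1
    ext a
    simp only [imgUnder, Finset.mem_image, Finset.mem_attach, true_and, Subtype.exists,
      mem_copySet, Set.exists_mem_image]
    constructor
    · rintro ⟨_, ⟨x, hx, rfl⟩, rfl⟩
      exact ⟨x, hx, by simp [copyMap]⟩
    · rintro ⟨x, hx, rfl⟩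
      exact ⟨_, ⟨x, hx, rfl⟩, by simp [copyMap]⟩
  deg T _ S hS := F.eq_bot_of_lt h _ _ (by rw [card_copySet]; omega)

/-- **Corollary B** (Church–Ellenberg). Let `M` be a free FI-module generated in degree
≤ k, let `V` be an arbitrary FI-module generated in degree ≤ d, and let `φ : V → M` be
a morphism of FI-modules.  Then the kernel of `φ` is generated in degree ≤ k + d + 1. -/
theorem ker_genLE (M V : FIModule) (k d : ℕ)
    (hfree : FreeStructure M) (hMgen : M.GenLE k) (hVgen : V.GenLE d)
    (φ : FIHom V M) :
    FamGenLE V (fun T => (φ.app T).ker) (k + d + 1) := by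
  intro T x hx
  have hgen := FIMod.ker_genLT (k + 1) (d + 1) (hfree.ext hMgen) (FIModule.genLT_ext hVgen) φ.ext
  let E := copyEquiv ↥T
  have hx' : (V.map E.toEmbedding x : V.ext.obj ↥T) ∈ φ.ext.ker ↥T := by
    have h := DFunLike.congr_fun (φ.natural E.toEmbedding) x
    exact h.trans ((congrArg (M.map E.toEmbedding) (AddMonoidHom.mem_ker.1 hx)).trans (map_zero _))
  have hE : E.toEmbedding.trans E.symm.toEmbedding = Function.Embedding.refl ↥T := by
    ext; simp
  rw [← V.map_refl_apply x, ← hE, V.map_trans_apply]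
  rw [← AddSubgroup.mem_comap]
  refine (AddSubgroup.closure_le _).2 ?_ (hgen ↥T hx')
  rintro _ ⟨S, hS, f, v, hc, hv, rfl⟩
  refine AddSubgroup.subset_closure ⟨copy S, (copyMap f).trans E.symm.toEmbedding, v, ?_, hv, ?_⟩
  · rw [card_copy]; omega
  · exact (V.map_trans_apply (copyMap f) E.symm.toEmbedding v).symm
end

section
/- Let V be an FI-module, a ≥ 1, and m ≥ −1, and suppose (D^a V)_T = 0 for every finite set T with |T| > m; that is, whenever |T| > m, V_{T⊔[⋆_a]} equals the sum of the images of V_{T⊔[⋆_a]−{⋆_j}} for j = 1,…,a. Then V is generated in degree ≤ m + a. -/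
/-- Generation in degree ≤ m for an integer bound `m` (allowing `m = -1`). -/
def FIModule.GenLEZ (V : FIModule) (m : ℤ) : Prop :=
  ∀ T : Finset ℤ, ∀ x : V.obj T,
    x ∈ AddSubgroup.closure {y : V.obj T |
      ∃ (S : Finset ℤ) (f : ↥S ↪ ↥T) (v : V.obj S), (S.card : ℤ) ≤ m ∧ y = V.map f v}

/-- The part of `V_T` spanned by the images of the `V_S` with `|S| ≤ m`. -/
def FIModule.genSpan (V : FIModule) (m : ℤ) (T : Finset ℤ) : AddSubgroup (V.obj T) :=
  AddSubgroup.closure {y : V.obj T |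
    ∃ (S : Finset ℤ) (f : ↥S ↪ ↥T) (v : V.obj S), (S.card : ℤ) ≤ m ∧ y = V.map f v}

/-- The subgroups `V.genSpan m T` form a sub-FI-module of `V`. -/
theorem FIModule.map_mem_genSpan (V : FIModule) (m : ℤ) {S T : Finset ℤ} (f : ↥S ↪ ↥T)
    {x : V.obj S} (hx : x ∈ V.genSpan m S) : V.map f x ∈ V.genSpan m T := by
  have h : V.genSpan m S ≤ (V.genSpan m T).comap (V.map f) := by
    refine (AddSubgroup.closure_le _).2 ?_
    rintro _ ⟨R, g, v, hR, rfl⟩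
    refine AddSubgroup.subset_closure ⟨R, g.trans f, v, hR, ?_⟩
    rw [V.map_comp]
    rfl
  exact h hx


/-- **Proposition 2.9, second half** (Church–Ellenberg). Let `V` be an FI-module,
`a ≥ 1`, and `m ≥ -1`, and suppose `(D^a V)_T = 0` for every finite set `T` with
`|T| > m`: that is, whenever `|T| > m` (and `T` is disjoint from the fixed `a`-element
set `[⋆_a]`, realized here as `{-a,…,-1} ⊆ ℤ` with `⋆_j = -j`), `V_{T⊔[⋆_a]}` equals
the sum of the images of the maps `V_{T⊔[⋆_a]−{⋆_j}} → V_{T⊔[⋆_a]}` for `j = 1,…,a`.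
Then `V` is generated in degree ≤ m + a. -/
theorem FIModule.genLE_of_Da_vanishing (V : FIModule) (a : ℕ) (ha : 1 ≤ a)
    (m : ℤ) (hm : -1 ≤ m)
    (hD : ∀ T : Finset ℤ, Disjoint T (Finset.Icc (-(a : ℤ)) (-1)) →
      (T.card : ℤ) > m →
      (⨆ j ∈ Finset.Icc (1 : ℤ) (a : ℤ),
        (V.map (inclEmb
          (Finset.erase_subset (-j) (T ∪ Finset.Icc (-(a : ℤ)) (-1))))).range) =
      (⊤ : AddSubgroup (V.obj (T ∪ Finset.Icc (-(a : ℤ)) (-1))))) :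
    V.GenLEZ (m + a) := by
  suffices h : ∀ (n : ℕ) (T : Finset ℤ), T.card = n → ∀ x : V.obj T, x ∈ V.genSpan (m + a) T from
    fun T x => h _ T rfl x
  intro n
  induction n with
  | zero =>
    -- Here `m + a ≥ 0`, so the empty set is itself an allowed source.
    intro T hT x
    refine AddSubgroup.subset_closure ⟨T, Function.Embedding.refl _, x, by omega, ?_⟩
    rw [V.map_id]
    rfl
  | succ k ih =>
    intro T hT x
    by_cases hle : (T.card : ℤ) ≤ m + a
    · refine AddSubgroup.subset_closure ⟨T, Function.Embedding.refl _, x, hle, ?_⟩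
      rw [V.map_id]
      rfl
    -- `|T| > m + a ≥ a - 1`, so `|T| - a` is a genuine cardinality and `{0, …, |T| - a - 1}`
    -- can play the role of `T'`.
    obtain ⟨T', hT'⟩ : ∃ T' : Finset ℤ, T' = Finset.Ico 0 ((T.card : ℤ) - a) := ⟨_, rfl⟩
    have hcard' : (T'.card : ℤ) = T.card - a := by
      rw [hT', Int.card_Ico]
      omega
    have hdisj : Disjoint T' (Finset.Icc (-(a : ℤ)) (-1)) := by
      rw [Finset.disjoint_left, hT']
      intro z hz hz'
      rw [Finset.mem_Ico] at hz
      rw [Finset.mem_Icc] at hz'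
      omega
    have htop := hD T' hdisj (by omega)
    have hcardU : (T' ∪ Finset.Icc (-(a : ℤ)) (-1)).card = T.card := by
      rw [Finset.card_union_of_disjoint hdisj, Int.card_Icc]
      omega
    have hU : ∀ y, y ∈ V.genSpan (m + a) (T' ∪ Finset.Icc (-(a : ℤ)) (-1)) := by
      intro y
      have hy : y ∈ (⊤ : AddSubgroup (V.obj (T' ∪ Finset.Icc (-(a : ℤ)) (-1)))) :=
        AddSubgroup.mem_top y
      rw [← htop] at hy
      refine (iSup₂_le fun j hj => ?_ : _ ≤ V.genSpan (m + a) _) hy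
      rintro _ ⟨v, rfl⟩
      refine V.map_mem_genSpan _ _ (ih _ ?_ v)
      rw [Finset.mem_Icc] at hj
      rw [Finset.card_erase_of_mem, hcardU, hT, Nat.add_sub_cancel]
      refine Finset.mem_union_right _ (Finset.mem_Icc.2 ?_)
      omega
    let e := Finset.equivOfCardEq hcardU
    have hx : x = V.map e.toEmbedding (V.map e.symm.toEmbedding x) := by
      have hc := V.map_comp e.symm.toEmbedding e.toEmbedding
      have hid : e.symm.toEmbedding.trans e.toEmbedding = Function.Embedding.refl _ := by
        ext z
        simp
      rw [hid, V.map_id] at hc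
      exact DFunLike.congr_fun hc x
    rw [hx]
    exact V.map_mem_genSpan _ _ (hU _)
end

section
/- Let U be an FB-module, and consider the free FI-module M(U). Then there is a natural isomorphism of FI-modules D(M(U)) ≅ M(SU), where SU is the FB-module (SU)_R = U_{R⊔{⋆}}. Concretely, for every finite set T the map V_T → (SV)_T = V_{T⊔{⋆}} (induced by T ⊆ T⊔{⋆}) applied to V = M(U) is injective, and its cokernel (D M(U))_T is naturally isomorphic to ⊕_{R ⊆ T} U_{R⊔{⋆}} = M(SU)_T, compatibly with all FI-morphisms. -/
/-! Write `⋆ = -1`. The subsets of `T ⊔ {⋆}` split into those avoiding `⋆`, which are the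
subsets of `T`, and those of the form `R ⊔ {⋆}` with `R ⊆ T`. Accordingly `M(U)_{T ⊔ {⋆}}` is a
direct sum `M(U)_T ⊕ M(SU)_T`: the inclusion of the first factor is `intoShift`, with retraction
`avoidProj`, and the second factor has projection `starProj` and inclusion `starIncl`.
The identities `avoidProj_intoShift`, `starProj_intoShift`, `starProj_starIncl` and
`splitting` express this decomposition. Hence `intoShift` is injective and `starProj` induces an
isomorphism from its cokernel to `M(SU)_T`. An injection extended by `⋆ ↦ ⋆` preserves both
kinds of subsets, so `starProj` is natural (`starProj_natural`).

Equal subsets are not definitionally equal here, so elements of their summands are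
compared by `of_map_eq` and `of_map_eq_shift`, where only the underlying functions of
the bijections have to agree. -/

open DirectSum

/-- An FB-module: a functor from the category of finite sets (modeled as finite subsets
of `ℤ`) and bijections to abelian groups. -/
structure FBModule where
  obj : Finset ℤ → Type
  [grp : ∀ T, AddCommGroup (obj T)]
  map : ∀ {S T : Finset ℤ}, (↥S ≃ ↥T) → (obj S →+ obj T)
  map_refl : ∀ T : Finset ℤ, map (Equiv.refl ↥T) = AddMonoidHom.id (obj T)
  map_trans : ∀ {S T R : Finset ℤ} (e : ↥S ≃ ↥T) (e' : ↥T ≃ ↥R),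
    map (e.trans e') = (map e').comp (map e)

attribute [instance] FBModule.grp

lemma imgUnder_subset {T T' : Finset ℤ} (f : ↥T ↪ ↥T') {S : Finset ℤ} (hS : S ⊆ T) :
    imgUnder f hS ⊆ T' := by
  intro x hx
  rw [imgUnder, Finset.mem_image] at hx
  obtain ⟨a, -, rfl⟩ := hx
  exact (f ⟨a.1, hS a.2⟩).2

/-- The bijection from `S` onto its image under an embedding. -/
noncomputable def imgEquiv {T T' : Finset ℤ} (f : ↥T ↪ ↥T') {S : Finset ℤ} (hS : S ⊆ T) :
    ↥S ≃ ↥(imgUnder f hS) :=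
  Equiv.ofBijective
    (fun x => ⟨((f ⟨x.1, hS x.2⟩ : ↥T') : ℤ),
      Finset.mem_image.mpr ⟨x, Finset.mem_attach _ _, rfl⟩⟩)
    ⟨fun a b hab => by
      have h1 : (f ⟨a.1, hS a.2⟩) = f ⟨b.1, hS b.2⟩ :=
        Subtype.ext (by simpa using congrArg Subtype.val hab)
      have h2 := f.injective h1
      exact Subtype.ext (by simpa using congrArg Subtype.val h2),
     fun y => by
      obtain ⟨a, -, ha⟩ := Finset.mem_image.mp y.2
      exact ⟨a, Subtype.ext ha⟩⟩

/-- The value `M(U)_T = ⊕_{S ⊆ T} U_S` of the free FI-module on the FB-module `U`. -/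
abbrev freeObj (U : FBModule) (T : Finset ℤ) : Type :=
  ⨁ S : ↥T.powerset, U.obj S.1

/-- The map `M(U)_T → M(U)_{T'}` induced by an injection `f : T ↪ T'`, sending the
summand `U_S` isomorphically onto the summand `U_{f(S)}` via `f|_S`. -/
noncomputable def freeMap (U : FBModule) {T T' : Finset ℤ} (f : ↥T ↪ ↥T') :
    freeObj U T →+ freeObj U T' :=
  DirectSum.toAddMonoid fun S =>
    (DirectSum.of (fun S' : ↥T'.powerset => U.obj S'.1)
        ⟨imgUnder f (Finset.mem_powerset.mp S.2),
          Finset.mem_powerset.mpr (imgUnder_subset f (Finset.mem_powerset.mp S.2))⟩).comp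
      (U.map (imgEquiv f (Finset.mem_powerset.mp S.2)))

/-- The value `M(SU)_T = ⊕_{R ⊆ T} (SU)_R = ⊕_{R ⊆ T} U_{R ⊔ {⋆}}` of the free
FI-module on the shifted FB-module `SU`, realizing the one-point set `{⋆}` as
`{-1} ⊆ ℤ`. -/
abbrev shiftObj (U : FBModule) (T : Finset ℤ) : Type :=
  ⨁ R : ↥T.powerset, U.obj (insert (-1 : ℤ) R.1)

/-- The extension of a bijection `R ≃ R'` to a bijection
`R ⊔ {⋆} ≃ R' ⊔ {⋆}` fixing the point `⋆ = -1`. -/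
noncomputable def extEquiv {R R' : Finset ℤ} (hR : (-1 : ℤ) ∉ R) (hR' : (-1 : ℤ) ∉ R')
    (e : ↥R ≃ ↥R') : ↥(insert (-1 : ℤ) R) ≃ ↥(insert (-1 : ℤ) R') :=
  (Finset.subtypeInsertEquivOption hR).trans
    ((Equiv.optionCongr e).trans (Finset.subtypeInsertEquivOption hR').symm)

/-- The map `M(SU)_T → M(SU)_{T'}` induced by an injection `f : T ↪ T'`. -/
noncomputable def shiftMap (U : FBModule) {T T' : Finset ℤ} (hT : (-1 : ℤ) ∉ T)
    (hT' : (-1 : ℤ) ∉ T') (f : ↥T ↪ ↥T') : shiftObj U T →+ shiftObj U T' :=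
  DirectSum.toAddMonoid fun R =>
    (DirectSum.of (fun R' : ↥T'.powerset => U.obj (insert (-1 : ℤ) R'.1))
        ⟨imgUnder f (Finset.mem_powerset.mp R.2),
          Finset.mem_powerset.mpr (imgUnder_subset f (Finset.mem_powerset.mp R.2))⟩).comp
      (U.map (extEquiv (fun h => hT (Finset.mem_powerset.mp R.2 h))
        (fun h => hT' (imgUnder_subset f (Finset.mem_powerset.mp R.2) h))
        (imgEquiv f (Finset.mem_powerset.mp R.2))))

/-- The extension of an injection `f : T ↪ T'` to an injection
`T ⊔ {⋆} ↪ T' ⊔ {⋆}` fixing `⋆ = -1`. -/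
noncomputable def extEmb {T T' : Finset ℤ} (hT : (-1 : ℤ) ∉ T) (hT' : (-1 : ℤ) ∉ T')
    (f : ↥T ↪ ↥T') : ↥(insert (-1 : ℤ) T) ↪ ↥(insert (-1 : ℤ) T') :=
  ((Finset.subtypeInsertEquivOption hT).toEmbedding.trans f.optionMap).trans
    (Finset.subtypeInsertEquivOption hT').symm.toEmbedding

/-- The canonical map `M(U)_T → (S M(U))_T = M(U)_{T ⊔ {⋆}}`, induced by the
inclusion `T ⊆ T ⊔ {⋆}` with `⋆ = -1`. -/
noncomputable def intoShift (U : FBModule) (T : Finset ℤ) :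
    freeObj U T →+ freeObj U (insert (-1 : ℤ) T) :=
  freeMap U (inclEmb (Finset.subset_insert (-1 : ℤ) T))

/-! ### Comparing elements of equal summands -/

/-- The identity bijection between two equal finite sets. -/
def castEquiv {A B : Finset ℤ} (h : A = B) : ↥A ≃ ↥B :=
  Equiv.subtypeEquivRight fun x => by rw [h]

@[simp] lemma castEquiv_coe {A B : Finset ℤ} (h : A = B) (x : ↥A) :
    ((castEquiv h x : ↥B) : ℤ) = x := rfl

@[simp] lemma imgEquiv_coe {T T' : Finset ℤ} (f : ↥T ↪ ↥T') {S : Finset ℤ} (hS : S ⊆ T)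
    (x : ↥S) : ((imgEquiv f hS x : ↥(imgUnder f hS)) : ℤ) = f ⟨x.1, hS x.2⟩ := rfl

/-- Two bijections out of the same set with the same underlying function have the same target. -/
lemma target_eq {S A B : Finset ℤ} (e : ↥S ≃ ↥A) (e' : ↥S ≃ ↥B)
    (h : ∀ x, (e x : ℤ) = e' x) : A = B := by
  ext z
  constructor
  · intro hz
    have := (e' (e.symm ⟨z, hz⟩)).2
    rwa [← h, e.apply_symm_apply] at this
  · intro hz
    have := (e (e'.symm ⟨z, hz⟩)).2
    rwa [h, e'.apply_symm_apply] at this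

lemma of_map_eq (U : FBModule) {T S A B : Finset ℤ} (hA : A ∈ T.powerset) (hB : B ∈ T.powerset)
    (e : ↥S ≃ ↥A) (e' : ↥S ≃ ↥B) (h : ∀ x, (e x : ℤ) = e' x) (u : U.obj S) :
    DirectSum.of (fun S' : ↥T.powerset => U.obj S'.1) ⟨A, hA⟩ (U.map e u) =
      DirectSum.of (fun S' : ↥T.powerset => U.obj S'.1) ⟨B, hB⟩ (U.map e' u) := by
  obtain rfl := target_eq e e' h
  obtain rfl : e = e' := Equiv.ext fun x => Subtype.ext (h x)
  rfl

lemma of_map_eq_shift (U : FBModule) {T S A B : Finset ℤ}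
    (hT : (-1 : ℤ) ∉ T) (hA : A ∈ T.powerset) (hB : B ∈ T.powerset)
    (e : ↥S ≃ ↥(insert (-1 : ℤ) A)) (e' : ↥S ≃ ↥(insert (-1 : ℤ) B))
    (h : ∀ x, (e x : ℤ) = e' x) (u : U.obj S) :
    DirectSum.of (fun R : ↥T.powerset => U.obj (insert (-1 : ℤ) R.1)) ⟨A, hA⟩ (U.map e u) =
      DirectSum.of (fun R : ↥T.powerset => U.obj (insert (-1 : ℤ) R.1)) ⟨B, hB⟩
        (U.map e' u) := by
  have hAB := target_eq e e' h
  obtain rfl : A = B := by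
    rw [← Finset.erase_insert (fun h => hT (Finset.mem_powerset.mp hA h)), hAB,
      Finset.erase_insert (fun h => hT (Finset.mem_powerset.mp hB h))]
  obtain rfl : e = e' := Equiv.ext fun x => Subtype.ext (h x)
  rfl

lemma map_map_apply (U : FBModule) {S T R : Finset ℤ} (e : ↥S ≃ ↥T) (e' : ↥T ≃ ↥R)
    (u : U.obj S) : U.map e' (U.map e u) = U.map (e.trans e') u := by
  rw [U.map_trans]; rfl

lemma map_refl_apply (U : FBModule) {S : Finset ℤ} (u : U.obj S) :
    U.map (Equiv.refl ↥S) u = u := by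
  rw [U.map_refl]; rfl

/-! ### The induced maps on summands -/

lemma freeMap_of (U : FBModule) {T T' : Finset ℤ} (f : ↥T ↪ ↥T') {S : Finset ℤ}
    (hS : S ∈ T.powerset) (u : U.obj S) :
    freeMap U f (DirectSum.of (fun S' : ↥T.powerset => U.obj S'.1) ⟨S, hS⟩ u) =
      DirectSum.of (fun S' : ↥T'.powerset => U.obj S'.1)
        ⟨imgUnder f (Finset.mem_powerset.mp hS),
          Finset.mem_powerset.mpr (imgUnder_subset f (Finset.mem_powerset.mp hS))⟩
        (U.map (imgEquiv f (Finset.mem_powerset.mp hS)) u) := by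
  simp [freeMap]

lemma shiftMap_of (U : FBModule) {T T' : Finset ℤ} (hT : (-1 : ℤ) ∉ T) (hT' : (-1 : ℤ) ∉ T')
    (f : ↥T ↪ ↥T') {R : Finset ℤ} (hR : R ∈ T.powerset) (u : U.obj (insert (-1 : ℤ) R)) :
    shiftMap U hT hT' f
        (DirectSum.of (fun R : ↥T.powerset => U.obj (insert (-1 : ℤ) R.1)) ⟨R, hR⟩ u) =
      DirectSum.of (fun R' : ↥T'.powerset => U.obj (insert (-1 : ℤ) R'.1))
        ⟨imgUnder f (Finset.mem_powerset.mp hR),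
          Finset.mem_powerset.mpr (imgUnder_subset f (Finset.mem_powerset.mp hR))⟩
        (U.map (extEquiv (fun h => hT (Finset.mem_powerset.mp hR h))
          (fun h => hT' (imgUnder_subset f (Finset.mem_powerset.mp hR) h))
          (imgEquiv f (Finset.mem_powerset.mp hR))) u) := by
  simp [shiftMap]

lemma extEquiv_coe {R R' : Finset ℤ} (hR : (-1 : ℤ) ∉ R) (hR' : (-1 : ℤ) ∉ R')
    (e : ↥R ≃ ↥R') (x : ↥(insert (-1 : ℤ) R)) :
    ((extEquiv hR hR' e x : ↥(insert (-1 : ℤ) R')) : ℤ) =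
      if h : (x : ℤ) ∈ R then (e ⟨x, h⟩ : ℤ) else -1 := by
  obtain ⟨x, hx⟩ := x
  rcases Finset.mem_insert.mp hx with rfl | hx'
  · simp [extEquiv, Finset.subtypeInsertEquivOption, hR]
  · have : x ≠ -1 := by rintro rfl; exact hR hx'
    simp [extEquiv, Finset.subtypeInsertEquivOption, hx', this]

lemma extEmb_coe {T T' : Finset ℤ} (hT : (-1 : ℤ) ∉ T) (hT' : (-1 : ℤ) ∉ T')
    (f : ↥T ↪ ↥T') (x : ↥(insert (-1 : ℤ) T)) :
    ((extEmb hT hT' f x : ↥(insert (-1 : ℤ) T')) : ℤ) =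
      if h : (x : ℤ) ∈ T then (f ⟨x, h⟩ : ℤ) else -1 := by
  obtain ⟨x, hx⟩ := x
  rcases Finset.mem_insert.mp hx with rfl | hx'
  · simp [extEmb, Finset.subtypeInsertEquivOption, hT]
  · have : x ≠ -1 := by rintro rfl; exact hT hx'
    simp [extEmb, Finset.subtypeInsertEquivOption, hx', this]

lemma mem_imgUnder {T T' : Finset ℤ} (f : ↥T ↪ ↥T') {S : Finset ℤ} (hS : S ⊆ T) (z : ℤ) :
    z ∈ imgUnder f hS ↔ ∃ (x : ℤ) (h : x ∈ S), (f ⟨x, hS h⟩ : ℤ) = z := by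
  simp [imgUnder]

/-- An injection extended by `⋆ ↦ ⋆` preserves whether a subset contains `⋆`. -/
lemma star_mem_imgUnder_extEmb {T T' : Finset ℤ} (hT : (-1 : ℤ) ∉ T) (hT' : (-1 : ℤ) ∉ T')
    (f : ↥T ↪ ↥T') {S : Finset ℤ} (hS : S ⊆ insert (-1 : ℤ) T) :
    (-1 : ℤ) ∈ imgUnder (extEmb hT hT' f) hS ↔ (-1 : ℤ) ∈ S := by
  rw [mem_imgUnder]
  constructor
  · rintro ⟨x, hx, h⟩
    rw [extEmb_coe] at h
    split_ifs at h with hxT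
    · exact absurd (h ▸ (f ⟨x, hxT⟩).2) hT'
    · rcases Finset.mem_insert.mp (hS hx) with rfl | h'
      · exact hx
      · exact absurd h' hxT
  · intro h
    exact ⟨-1, h, by rw [extEmb_coe, dif_neg hT]⟩

lemma star_notMem_imgUnder_inclEmb {T T' S : Finset ℤ} (hT : (-1 : ℤ) ∉ T) (hTT' : T ⊆ T')
    (hS : S ⊆ T) : (-1 : ℤ) ∉ imgUnder (inclEmb hTT') hS := by
  rw [mem_imgUnder]
  rintro ⟨x, hx, h⟩
  obtain rfl : x = -1 := h
  exact hT (hS hx)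

/-! ### The splitting by membership of `⋆` -/

lemma erase_mem {T S : Finset ℤ} (hS : S ∈ (insert (-1 : ℤ) T).powerset) :
    S.erase (-1 : ℤ) ∈ T.powerset :=
  Finset.mem_powerset.mpr (Finset.subset_insert_iff.mp (Finset.mem_powerset.mp hS))

lemma mem_of_avoid {T S : Finset ℤ} (hS : S ∈ (insert (-1 : ℤ) T).powerset)
    (h : (-1 : ℤ) ∉ S) : S ∈ T.powerset :=
  Finset.mem_powerset.mpr
    ((Finset.subset_insert_iff_of_notMem h).mp (Finset.mem_powerset.mp hS))

lemma insert_mem {T R : Finset ℤ} (hR : R ∈ T.powerset) :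
    insert (-1 : ℤ) R ∈ (insert (-1 : ℤ) T).powerset :=
  Finset.mem_powerset.mpr (Finset.insert_subset_insert _ (Finset.mem_powerset.mp hR))

/-- The projection `M(U)_{T ⊔ {⋆}} → M(SU)_T` onto the summands `U_S` with `⋆ ∈ S`, where
`U_S` is identified with `(SU)_{S \ {⋆}}`. -/
noncomputable def starProj (U : FBModule) (T : Finset ℤ) :
    freeObj U (insert (-1 : ℤ) T) →+ shiftObj U T :=
  DirectSum.toAddMonoid fun S =>
    if h : (-1 : ℤ) ∈ S.1 then
      (DirectSum.of (fun R : ↥T.powerset => U.obj (insert (-1 : ℤ) R.1))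
        ⟨S.1.erase (-1), erase_mem S.2⟩).comp (U.map (castEquiv (Finset.insert_erase h).symm))
    else 0

/-- The projection `M(U)_{T ⊔ {⋆}} → M(U)_T` onto the summands `U_S` with `⋆ ∉ S`. -/
noncomputable def avoidProj (U : FBModule) (T : Finset ℤ) :
    freeObj U (insert (-1 : ℤ) T) →+ freeObj U T :=
  DirectSum.toAddMonoid fun S =>
    if h : (-1 : ℤ) ∈ S.1 then 0
    else DirectSum.of (fun S' : ↥T.powerset => U.obj S'.1) ⟨S.1, mem_of_avoid S.2 h⟩

/-- The inclusion `M(SU)_T → M(U)_{T ⊔ {⋆}}` sending the summand `(SU)_R` identically to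
`U_{R ⊔ {⋆}}`. -/
noncomputable def starIncl (U : FBModule) (T : Finset ℤ) :
    shiftObj U T →+ freeObj U (insert (-1 : ℤ) T) :=
  DirectSum.toAddMonoid fun R =>
    DirectSum.of (fun S : ↥(insert (-1 : ℤ) T).powerset => U.obj S.1)
      ⟨insert (-1) R.1, insert_mem R.2⟩

section
variable (U : FBModule) {T : Finset ℤ}

lemma starProj_of_mem {S : Finset ℤ} (hS : S ∈ (insert (-1 : ℤ) T).powerset)
    (h : (-1 : ℤ) ∈ S) (u : U.obj S) :
    starProj U T (DirectSum.of
        (fun S : ↥(insert (-1 : ℤ) T).powerset => U.obj S.1) ⟨S, hS⟩ u) =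
      DirectSum.of (fun R : ↥T.powerset => U.obj (insert (-1 : ℤ) R.1))
        ⟨S.erase (-1), erase_mem hS⟩ (U.map (castEquiv (Finset.insert_erase h).symm) u) := by
  simp [starProj, h]

lemma starProj_of_notMem {S : Finset ℤ} (hS : S ∈ (insert (-1 : ℤ) T).powerset)
    (h : (-1 : ℤ) ∉ S) (u : U.obj S) :
    starProj U T (DirectSum.of
        (fun S : ↥(insert (-1 : ℤ) T).powerset => U.obj S.1) ⟨S, hS⟩ u) = 0 := by
  simp [starProj, h]

lemma avoidProj_of_mem {S : Finset ℤ} (hS : S ∈ (insert (-1 : ℤ) T).powerset)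
    (h : (-1 : ℤ) ∈ S) (u : U.obj S) :
    avoidProj U T (DirectSum.of
        (fun S : ↥(insert (-1 : ℤ) T).powerset => U.obj S.1) ⟨S, hS⟩ u) = 0 := by
  simp [avoidProj, h]

lemma avoidProj_of_notMem {S : Finset ℤ} (hS : S ∈ (insert (-1 : ℤ) T).powerset)
    (h : (-1 : ℤ) ∉ S) (u : U.obj S) :
    avoidProj U T (DirectSum.of
        (fun S : ↥(insert (-1 : ℤ) T).powerset => U.obj S.1) ⟨S, hS⟩ u) =
      DirectSum.of (fun S' : ↥T.powerset => U.obj S'.1) ⟨S, mem_of_avoid hS h⟩ u := by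
  simp [avoidProj, h]

lemma starIncl_of {R : Finset ℤ} (hR : R ∈ T.powerset) (u : U.obj (insert (-1 : ℤ) R)) :
    starIncl U T (DirectSum.of
        (fun R : ↥T.powerset => U.obj (insert (-1 : ℤ) R.1)) ⟨R, hR⟩ u) =
      DirectSum.of (fun S : ↥(insert (-1 : ℤ) T).powerset => U.obj S.1)
        ⟨insert (-1) R, insert_mem hR⟩ u := by
  simp [starIncl]

lemma avoidProj_intoShift (hT : (-1 : ℤ) ∉ T) (x : freeObj U T) :
    avoidProj U T (intoShift U T x) = x := by
  induction x using DirectSum.induction_on with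
  | zero => simp
  | add x y hx hy => rw [map_add, map_add, hx, hy]
  | of S u =>
    obtain ⟨S, hS⟩ := S
    rw [intoShift, freeMap_of, avoidProj_of_notMem U _
      (star_notMem_imgUnder_inclEmb hT _ (Finset.mem_powerset.mp hS))]
    conv_rhs => rw [← map_refl_apply U u]
    exact of_map_eq U _ _ _ _ (by intro _; rfl) u

lemma starProj_intoShift (hT : (-1 : ℤ) ∉ T) (x : freeObj U T) :
    starProj U T (intoShift U T x) = 0 := by
  induction x using DirectSum.induction_on with
  | zero => simp
  | add x y hx hy => rw [map_add, map_add, hx, hy, add_zero]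
  | of S u =>
    obtain ⟨S, hS⟩ := S
    rw [intoShift, freeMap_of, starProj_of_notMem U _
      (star_notMem_imgUnder_inclEmb hT _ (Finset.mem_powerset.mp hS))]

lemma starProj_starIncl (hT : (-1 : ℤ) ∉ T) (x : shiftObj U T) :
    starProj U T (starIncl U T x) = x := by
  induction x using DirectSum.induction_on with
  | zero => simp
  | add x y hx hy => rw [map_add, map_add, hx, hy]
  | of R u =>
    obtain ⟨R, hR⟩ := R
    rw [starIncl_of, starProj_of_mem U _ (Finset.mem_insert_self _ _)]
    conv_rhs => rw [← map_refl_apply U u]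
    exact of_map_eq_shift U hT _ _ _ _ (by intro _; rfl) u

lemma splitting (x : freeObj U (insert (-1 : ℤ) T)) :
    intoShift U T (avoidProj U T x) + starIncl U T (starProj U T x) = x := by
  induction x using DirectSum.induction_on with
  | zero => simp
  | add x y hx hy =>
    simp only [map_add]
    rw [add_add_add_comm, hx, hy]
  | of S u =>
    obtain ⟨S, hS⟩ := S
    by_cases h : (-1 : ℤ) ∈ S
    · rw [avoidProj_of_mem U hS h, starProj_of_mem U hS h, starIncl_of, map_zero, zero_add]
      conv_rhs => rw [← map_refl_apply U u]
      exact of_map_eq U _ _ _ _ (by intro _; rfl) u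
    · rw [avoidProj_of_notMem U hS h, starProj_of_notMem U hS h, map_zero, add_zero,
        intoShift, freeMap_of]
      conv_rhs => rw [← map_refl_apply U u]
      exact of_map_eq U _ _ _ _ (by intro _; rfl) u

lemma range_intoShift (hT : (-1 : ℤ) ∉ T) :
    (intoShift U T).range = (starProj U T).ker := by
  ext x
  rw [AddMonoidHom.mem_ker]
  constructor
  · rintro ⟨y, rfl⟩
    exact starProj_intoShift U hT y
  · intro hx
    refine ⟨avoidProj U T x, ?_⟩
    have := splitting U x
    rwa [hx, map_zero, add_zero] at this

lemma starProj_natural {T' : Finset ℤ} (hT : (-1 : ℤ) ∉ T) (hT' : (-1 : ℤ) ∉ T')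
    (f : ↥T ↪ ↥T') (x : freeObj U (insert (-1 : ℤ) T)) :
    starProj U T' (freeMap U (extEmb hT hT' f) x) = shiftMap U hT hT' f (starProj U T x) := by
  induction x using DirectSum.induction_on with
  | zero => simp
  | add x y hx hy => simp only [map_add, hx, hy]
  | of S u =>
    obtain ⟨S, hS⟩ := S
    have hiff := star_mem_imgUnder_extEmb hT hT' f (Finset.mem_powerset.mp hS)
    by_cases h : (-1 : ℤ) ∈ S
    · rw [freeMap_of, starProj_of_mem U _ (hiff.mpr h), starProj_of_mem U hS h, shiftMap_of,
        map_map_apply, map_map_apply]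
      refine of_map_eq_shift U hT' _ _ _ _ (fun x => ?_) u
      -- Both bijections send `⋆` to `⋆` and agree with `f` on `S \ {⋆} ⊆ T`.
      rw [Equiv.trans_apply, Equiv.trans_apply, castEquiv_coe, imgEquiv_coe,
        extEmb_coe, extEquiv_coe]
      have hx : (x : ℤ) ∈ T ↔ (x : ℤ) ∈ S.erase (-1) :=
        ⟨fun hxT => Finset.mem_erase.mpr ⟨fun h' => hT (h' ▸ hxT), x.2⟩,
          fun hxS => Finset.mem_powerset.mp (erase_mem hS) hxS⟩
      by_cases hxT : (x : ℤ) ∈ T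
      · refine (dif_pos hxT).trans (Eq.symm (dif_pos ?_))
        exact hx.mp hxT
      · refine (dif_neg hxT).trans (Eq.symm (dif_neg ?_))
        exact mt hx.mpr hxT
    · rw [freeMap_of, starProj_of_notMem U _ (mt hiff.mp h), starProj_of_notMem U hS h, map_zero]

end

/-! ### The cokernel -/

/-- The isomorphism `coker(M(U)_T → M(U)_{T ⊔ {⋆}}) ≅ M(SU)_T` induced by `starProj`. -/
noncomputable def cokerEquiv (U : FBModule) (T : Finset ℤ) (hT : (-1 : ℤ) ∉ T) :
    (freeObj U (insert (-1 : ℤ) T) ⧸ (intoShift U T).range) ≃+ shiftObj U T :=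
  (QuotientAddGroup.quotientAddEquivOfEq (range_intoShift U hT)).trans
    (QuotientAddGroup.quotientKerEquivOfRightInverse (starProj U T) (starIncl U T)
      (starProj_starIncl U hT))

lemma cokerEquiv_mk (U : FBModule) (T : Finset ℤ) (hT : (-1 : ℤ) ∉ T)
    (x : freeObj U (insert (-1 : ℤ) T)) :
    cokerEquiv U T hT (QuotientAddGroup.mk x) = starProj U T x := rfl

/-- **Lemma 2.6** (Church–Ellenberg): `D(M(U)) ≅ M(SU)`.  For every finite set `T`
(not containing the added point `⋆ = -1`), the canonical map
`M(U)_T → M(U)_{T⊔{⋆}}` is injective, and there are isomorphisms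
`(D M(U))_T = coker(M(U)_T → M(U)_{T⊔{⋆}}) ≅ M(SU)_T = ⊕_{R ⊆ T} U_{R⊔{⋆}}`
compatible with the maps induced by all injections `f : T ↪ T'`. -/
theorem D_free_iso_shift (U : FBModule) :
    (∀ (T : Finset ℤ), (-1 : ℤ) ∉ T → Function.Injective (intoShift U T)) ∧
    ∃ φ : ∀ (T : Finset ℤ), (-1 : ℤ) ∉ T →
        ((freeObj U (insert (-1 : ℤ) T) ⧸ (intoShift U T).range) ≃+ shiftObj U T),
      ∀ (T T' : Finset ℤ) (hT : (-1 : ℤ) ∉ T) (hT' : (-1 : ℤ) ∉ T')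
        (f : ↥T ↪ ↥T') (x : freeObj U (insert (-1 : ℤ) T)),
        φ T' hT' (QuotientAddGroup.mk (freeMap U (extEmb hT hT' f) x)) =
          shiftMap U hT hT' f (φ T hT (QuotientAddGroup.mk x)) := by
  exact ⟨fun T hT => Function.LeftInverse.injective (avoidProj_intoShift U hT), cokerEquiv U,
    fun T T' hT hT' f x => by
      rw [cokerEquiv_mk, cokerEquiv_mk]
      exact starProj_natural U hT hT' f x⟩
end

section
/- Fix finite sets S and T. Let C_k(S,T) be the quotient of the free abelian group on pairs ((u_1,…,u_k), f), where u_1,…,u_k are distinct elements of T and f : S → T is an injection with im f ∩ {u_1,…,u_k} = ∅, by the relations ((u_{σ(1)},…,u_{σ(k)}), f) = sign(σ)·((u_1,…,u_k), f) for σ ∈ S_k; define ∂ : C_k(S,T) → C_{k−1}(S,T) by ∂((u_1,…,u_k), f) = Σ_{i=1}^k (−1)^i ((u_1,…,û_i,…,u_k), f), and define the augmentation ε : C_0(S,T) → ℤ[Bij(S,T)] sending f to f if f is bijective and to 0 otherwise, where ℤ[Bij(S,T)] is the free abelian group on bijections S → T. Then ∂² = 0, ε∘∂ = 0, and the augmented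 complex ⋯ → C_1(S,T) → C_0(S,T) → ℤ[Bij(S,T)] → 0 is exact: ε induces an isomorphism H_0(C_•(S,T)) ≅ ℤ[Bij(S,T)], and H_i(C_•(S,T)) = 0 for all i > 0. -/
/-!
For a fixed injection `f`, the tuples with second component `f` span the augmented oriented chain
complex of the full simplex on the vertex set `T \ im f`, shifted by one degree. If `f` is not
bijective there is a vertex `a ∉ im f`, and the cone construction `(u, f) ↦ ((a, u), f)` (zero when
`a` already occurs in `u`) is a contracting homotopy: `∂ ∘ cone + cone ∘ ∂ = -1`
(`d_conePt_zero`, `d_conePt_succ`). If `f` is bijective, only `C_0` is nonzero, and there `ε` is the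
identity. Choosing a vertex for every non-surjective `f` assembles these into one homotopy
(`coneHom`), which gives exactness.

The two sign computations are that `∂` respects the sign relations (`exists_perm_succAbove`) and
that moving the entry `a` of a tuple to the front costs the sign of a cycle; both come from
`Fin.succAbove i = (Fin.cycleRange i)⁻¹ ∘ Fin.succ`. The identity `∂² = 0` also follows from the
homotopy formula, by induction on the degree: every basis element of positive degree is the cone
over its tail, and `∂∂ ∘ cone = cone ∘ ∂∂`.
-/

/-- The basis of the degree-`k` term of the complex `C_•(S,T)`: tuples
`((u_1,…,u_k), f)` of `k` distinct elements of `T` together with an injection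
`f : S ↪ T` whose image is disjoint from `{u_1,…,u_k}`. -/
def CBasis (S T : Finset ℤ) (k : ℕ) : Type :=
  {p : (Fin k ↪ ↥T) × (↥S ↪ ↥T) // ∀ (i : Fin k) (x : ↥S), p.1 i ≠ p.2 x}

/-- The action of a permutation `σ ∈ S_k` on basis elements, permuting the tuple. -/
def CBasis.act {S T : Finset ℤ} {k : ℕ} (σ : Equiv.Perm (Fin k)) (p : CBasis S T k) :
    CBasis S T k :=
  ⟨(σ.toEmbedding.trans p.1.1, p.1.2), fun i x => p.2 (σ i) x⟩

/-- The sign relations: `((u_{σ(1)},…,u_{σ(k)}), f) = sign σ · ((u_1,…,u_k), f)`. -/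
def CRel (S T : Finset ℤ) (k : ℕ) : AddSubgroup (FreeAbelianGroup (CBasis S T k)) :=
  AddSubgroup.closure {y | ∃ (σ : Equiv.Perm (Fin k)) (p : CBasis S T k),
    y = FreeAbelianGroup.of (CBasis.act σ p) -
      ((Equiv.Perm.sign σ : ℤ)) • FreeAbelianGroup.of p}

/-- The degree-`k` term `C_k(S,T)`: the free abelian group on the pairs
`((u_1,…,u_k), f)` modulo the sign relations. -/
def CTerm (S T : Finset ℤ) (k : ℕ) : Type :=
  FreeAbelianGroup (CBasis S T k) ⧸ CRel S T k

noncomputable instance (S T : Finset ℤ) (k : ℕ) : AddCommGroup (CTerm S T k) :=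
  QuotientAddGroup.Quotient.addCommGroup _

/-- The `i`-th face of a basis element: delete `u_i` from the tuple. -/
def CBasis.face {S T : Finset ℤ} {k : ℕ} (i : Fin (k + 1)) (p : CBasis S T (k + 1)) :
    CBasis S T k :=
  ⟨((i.succAboveEmb).trans p.1.1, p.1.2), fun j x => p.2 (i.succAbove j) x⟩

namespace CComplex

/-- Deleting the `i`-th entry after permuting by `σ` amounts to deleting entry `σ i` and then
permuting the remaining entries by some `τ`; its sign is that of `c_{σ i} * σ * c_i⁻¹`, where `c_i`
is the cycle `Fin.cycleRange i` moving `i` to the front. -/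
theorem exists_perm_succAbove {k : ℕ} (σ : Equiv.Perm (Fin (k + 1))) (i : Fin (k + 1)) :
    ∃ τ : Equiv.Perm (Fin k), (∀ j, σ (i.succAbove j) = (σ i).succAbove (τ j)) ∧
      (Equiv.Perm.sign τ : ℤ) =
        (-1) ^ (σ i : ℕ) * (Equiv.Perm.sign σ : ℤ) * (-1) ^ (i : ℕ) := by
  -- `ρ` fixes `0`, hence is induced by a permutation `τ` of the other `k` entries.
  set ρ : Equiv.Perm (Fin (k + 1)) := (σ i).cycleRange * σ * i.cycleRange⁻¹ with hρ
  have h0 : ρ 0 = 0 := by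
    simp [hρ, Equiv.Perm.mul_apply, Equiv.Perm.inv_def]
  obtain ⟨⟨q, τ⟩, hq⟩ := (Equiv.Perm.decomposeFin (n := k)).symm.surjective ρ
  have hq0 : q = 0 := by
    rw [← h0, ← hq]; simp
  subst hq0
  refine ⟨τ, fun j => ?_, ?_⟩
  · have h1 : ρ j.succ = (τ j).succ := by
      rw [← hq]; simp
    have h2 : (σ i).cycleRange (σ (i.succAbove j)) = (τ j).succ := by
      rw [← h1, hρ]
      simp [Equiv.Perm.mul_apply, Equiv.Perm.inv_def]
    rw [← Fin.cycleRange_symm_succ (σ i), ← h2, Equiv.symm_apply_apply]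
  · have h3 : Equiv.Perm.sign τ = Equiv.Perm.sign ρ := by
      rw [← hq]; simp
    rw [h3, hρ]
    simp

/-! ### The complex -/

variable {S T : Finset ℤ}

theorem CBasis.ext' {k : ℕ} {p q : CBasis S T k} (h1 : ∀ i, p.1.1 i = q.1.1 i)
    (h2 : p.1.2 = q.1.2) : p = q :=
  Subtype.ext (Prod.ext (DFunLike.ext _ _ h1) h2)

/-- The class in `C_k(S,T)` of a basis element. -/
noncomputable def cls {k : ℕ} (p : CBasis S T k) : CTerm S T k :=
  QuotientAddGroup.mk (FreeAbelianGroup.of p)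

theorem cls_act {k : ℕ} (σ : Equiv.Perm (Fin k)) (p : CBasis S T k) :
    cls (CBasis.act σ p) = (Equiv.Perm.sign σ : ℤ) • cls p := by
  have h : FreeAbelianGroup.of (CBasis.act σ p) -
      (Equiv.Perm.sign σ : ℤ) • FreeAbelianGroup.of p ∈ CRel S T k :=
    AddSubgroup.subset_closure ⟨σ, p, rfl⟩
  have h2 := (QuotientAddGroup.eq_zero_iff _).2 h
  rw [QuotientAddGroup.mk_sub, sub_eq_zero] at h2
  exact h2

/-- A function on basis elements compatible with the sign relations extends to `C_k(S,T)`. -/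
noncomputable def liftHom {A : Type*} [AddCommGroup A] {k : ℕ} (φ : CBasis S T k → A)
    (h : ∀ σ p, φ (CBasis.act σ p) = (Equiv.Perm.sign σ : ℤ) • φ p) : CTerm S T k →+ A :=
  QuotientAddGroup.lift (CRel S T k) (FreeAbelianGroup.lift φ) (by
    refine (AddSubgroup.closure_le _).2 ?_
    rintro _ ⟨σ, p, rfl⟩
    simp [h])

@[simp]
theorem liftHom_cls {A : Type*} [AddCommGroup A] {k : ℕ} (φ : CBasis S T k → A)
    (h : ∀ σ p, φ (CBasis.act σ p) = (Equiv.Perm.sign σ : ℤ) • φ p) (p : CBasis S T k) :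
    liftHom φ h (cls p) = φ p :=
  FreeAbelianGroup.lift_apply_of φ p

theorem hom_ext {A : Type*} [AddCommGroup A] {k : ℕ} {f g : CTerm S T k →+ A}
    (h : ∀ p, f (cls p) = g (cls p)) : f = g := by
  apply QuotientAddGroup.addMonoidHom_ext
  apply FreeAbelianGroup.lift_ext
  exact h

/-- The differential `∂ : C_{k+1}(S,T) → C_k(S,T)`. -/
noncomputable def d (k : ℕ) : CTerm S T (k + 1) →+ CTerm S T k :=
  liftHom (fun p => ∑ i : Fin (k + 1), ((-1 : ℤ) ^ ((i : ℕ) + 1)) • cls (CBasis.face i p)) (by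
    intro σ p
    have key : ∀ i : Fin (k + 1), ((-1 : ℤ) ^ ((i : ℕ) + 1)) • cls (CBasis.face i (CBasis.act σ p)) =
        (Equiv.Perm.sign σ : ℤ) •
          ((-1 : ℤ) ^ ((σ i : ℕ) + 1)) • cls (CBasis.face (σ i) p) := by
      intro i
      obtain ⟨τ, h1, h2⟩ := exists_perm_succAbove σ i
      have h3 : CBasis.face i (CBasis.act σ p) = CBasis.act τ (CBasis.face (σ i) p) :=
        CBasis.ext' (fun j => congrArg p.1.1 (h1 j)) rfl
      rw [h3, cls_act, h2, smul_smul, smul_smul]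
      congr 1
      have h4 : ((-1 : ℤ) ^ (i : ℕ)) * (-1) ^ (i : ℕ) = 1 := by
        rw [← mul_pow]; simp
      linear_combination
        (-(-1 : ℤ) ^ (σ i : ℕ) * (Equiv.Perm.sign σ : ℤ)) * h4
    simp only [key]
    rw [← Finset.smul_sum]
    congr 1
    exact Equiv.sum_comp σ
      (fun i => ((-1 : ℤ) ^ ((i : ℕ) + 1)) • cls (CBasis.face i p)))

theorem d_cls (k : ℕ) (p : CBasis S T (k + 1)) :
    d k (cls p) = ∑ i : Fin (k + 1), ((-1 : ℤ) ^ ((i : ℕ) + 1)) • cls (CBasis.face i p) :=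
  liftHom_cls _ _ p

/-! ### The cone homotopy -/

/-- The basis element `((a, u_1, …, u_k), f)`. -/
def cone {k : ℕ} (a : ↥T) (p : CBasis S T k) (hu : ∀ i, p.1.1 i ≠ a) (hf : ∀ x, p.1.2 x ≠ a) :
    CBasis S T (k + 1) :=
  ⟨(⟨Fin.cons a p.1.1, Fin.cons_injective_iff.2
      ⟨fun ⟨i, hi⟩ => hu i hi, p.1.1.injective⟩⟩, p.1.2), fun i x => by
    refine Fin.cases ?_ (fun j => ?_) i
    · exact (hf x).symm
    · exact p.2 j x⟩

open Classical in
/-- The class of the cone with apex `a`, or zero if `a` occurs in the tuple or in the image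
of the injection. -/
noncomputable def conePt {k : ℕ} (a : ↥T) (p : CBasis S T k) : CTerm S T (k + 1) :=
  if h : (∀ i, p.1.1 i ≠ a) ∧ ∀ x, p.1.2 x ≠ a then cls (cone a p h.1 h.2) else 0

theorem conePt_act {k : ℕ} (a : ↥T) (σ : Equiv.Perm (Fin k)) (p : CBasis S T k) :
    conePt a (CBasis.act σ p) = (Equiv.Perm.sign σ : ℤ) • conePt a p := by
  by_cases h : (∀ i, p.1.1 i ≠ a) ∧ ∀ x, p.1.2 x ≠ a
  · have h' : (∀ i, (CBasis.act σ p).1.1 i ≠ a) ∧ ∀ x, (CBasis.act σ p).1.2 x ≠ a :=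
      ⟨fun i => h.1 (σ i), h.2⟩
    rw [conePt, conePt, dif_pos h, dif_pos h']
    have h3 : cone a (CBasis.act σ p) h'.1 h'.2 =
        CBasis.act (Equiv.Perm.decomposeFin.symm (0, σ)) (cone a p h.1 h.2) := by
      refine CBasis.ext' (fun i => ?_) rfl
      refine Fin.cases ?_ (fun j => ?_) i
      · simp [cone, CBasis.act]
      · simp [cone, CBasis.act]
    rw [h3, cls_act]
    simp
  · have h' : ¬ ((∀ i, (CBasis.act σ p).1.1 i ≠ a) ∧ ∀ x, (CBasis.act σ p).1.2 x ≠ a) := by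
      rintro ⟨h1, h2⟩
      refine h ⟨fun i => ?_, h2⟩
      have := h1 (σ.symm i)
      simpa [CBasis.act] using this
    rw [conePt, conePt, dif_neg h, dif_neg h', smul_zero]

theorem d_conePt_zero (a : ↥T) (p : CBasis S T 0) (hf : ∀ x, p.1.2 x ≠ a) :
    d 0 (conePt a p) = -cls p := by
  rw [conePt, dif_pos ⟨fun i => i.elim0, hf⟩, d_cls]
  have : CBasis.face 0 (cone a p (fun i => i.elim0) hf) = p :=
    CBasis.ext' (fun i => i.elim0) rfl
  simp [this]

/-- The cone homotopy formula `∂ ∘ cone + cone ∘ ∂ = -1` in positive degree. If `a` is the `i`-th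
entry of the tuple, `cone p` vanishes and only the `i`-th face contributes to `cone (∂ p)`. -/
theorem d_conePt_succ {k : ℕ} (a : ↥T) (p : CBasis S T (k + 1)) (hf : ∀ x, p.1.2 x ≠ a) :
    d (k + 1) (conePt a p) +
      ∑ i : Fin (k + 1), ((-1 : ℤ) ^ ((i : ℕ) + 1)) • conePt a (CBasis.face i p) = -cls p := by
  by_cases hu : ∀ i, p.1.1 i ≠ a
  · rw [conePt, dif_pos ⟨hu, hf⟩, d_cls, Fin.sum_univ_succ]
    have h0 : CBasis.face 0 (cone a p hu hf) = p := CBasis.ext' (fun i => by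
      simp [CBasis.face, cone]) rfl
    have hs : ∀ i : Fin (k + 1), cls (CBasis.face i.succ (cone a p hu hf)) =
        conePt a (CBasis.face i p) := by
      intro i
      rw [conePt, dif_pos ⟨fun j => hu (i.succAbove j), hf⟩]
      congr 1
      refine CBasis.ext' (fun j => ?_) rfl
      refine Fin.cases ?_ (fun j => ?_) j
      · simp [cone, CBasis.face]
      · simp [cone, CBasis.face]
    simp only [h0, hs]
    rw [add_assoc, ← Finset.sum_add_distrib]
    simp [pow_succ]
  · push Not at hu
    obtain ⟨i, hi⟩ := hu
    have h1 : conePt a p = 0 := dif_neg (fun h => h.1 i hi)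
    rw [h1, map_zero, zero_add, Finset.sum_eq_single i]
    · have hu' : ∀ j, (CBasis.face i p).1.1 j ≠ a := by
        intro j hj
        have : p.1.1 (i.succAbove j) = p.1.1 i := hj.trans hi.symm
        exact Fin.succAbove_ne i j (p.1.1.injective this)
      -- Moving the entry `a` from position `i` to the front is the inverse of `cycleRange i`.
      have h2 : conePt a (CBasis.face i p) = cls (CBasis.act i.cycleRange⁻¹ p) := by
        rw [conePt, dif_pos ⟨hu', hf⟩]
        congr 1
        refine CBasis.ext' (fun j => ?_) rfl
        refine Fin.cases ?_ (fun j => ?_) j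
        · simp [cone, CBasis.act, Equiv.Perm.inv_def, hi]
        · simp [cone, CBasis.act, CBasis.face, Equiv.Perm.inv_def]
      rw [h2, cls_act, smul_smul]
      have h4 : ((-1 : ℤ) ^ (i : ℕ)) * (-1) ^ (i : ℕ) = 1 := by
        rw [← mul_pow]; simp
      simp [pow_succ, h4]
    · intro j _ hj
      obtain ⟨l, hl⟩ := Fin.exists_succAbove_eq hj.symm
      have : conePt a (CBasis.face j p) = 0 :=
        dif_neg (fun h => h.1 l ((congrArg p.1.1 hl).trans hi))
      rw [this, smul_zero]
    · simp

/-- The homotopy `C_k(S,T) → C_{k+1}(S,T)` that cones off with the apex `t f` on tuples with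
injection `f`, and vanishes on those for which `t f = none`. -/
noncomputable def coneHom (t : (↥S ↪ ↥T) → Option ↥T) (k : ℕ) : CTerm S T k →+ CTerm S T (k + 1) :=
  liftHom (fun p => (t p.1.2).elim 0 (fun a => conePt a p)) (by
    intro σ p
    change (t p.1.2).elim _ _ = _
    cases t p.1.2 with
    | none => simp
    | some a => exact conePt_act a σ p)

theorem coneHom_some {t : (↥S ↪ ↥T) → Option ↥T} {k : ℕ} {p : CBasis S T k} {a : ↥T}
    (h : t p.1.2 = some a) : coneHom t k (cls p) = conePt a p := by
  rw [coneHom, liftHom_cls, h]; rfl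

theorem coneHom_none {t : (↥S ↪ ↥T) → Option ↥T} {k : ℕ} {p : CBasis S T k}
    (h : t p.1.2 = none) : coneHom t k (cls p) = 0 := by
  rw [coneHom, liftHom_cls, h]; rfl

theorem coneHom_d {t : (↥S ↪ ↥T) → Option ↥T} {k : ℕ} {p : CBasis S T (k + 1)} {a : ↥T}
    (h : t p.1.2 = some a) : coneHom t k (d k (cls p)) =
      ∑ i : Fin (k + 1), ((-1 : ℤ) ^ ((i : ℕ) + 1)) • conePt a (CBasis.face i p) := by
  rw [d_cls, map_sum]
  refine Finset.sum_congr rfl fun i _ => ?_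
  rw [map_zsmul, coneHom_some (p := CBasis.face i p) h]

theorem homotopy_succ {t : (↥S ↪ ↥T) → Option ↥T} {k : ℕ} {p : CBasis S T (k + 1)} {a : ↥T}
    (h : t p.1.2 = some a) (hf : ∀ x, p.1.2 x ≠ a) :
    d (k + 1) (coneHom t (k + 1) (cls p)) + coneHom t k (d k (cls p)) = -cls p := by
  rw [coneHom_d h, coneHom_some h, d_conePt_succ a p hf]

/-- Every basis element of positive degree is the cone over its tail. -/
theorem conePt_face_zero {k : ℕ} (p : CBasis S T (k + 1)) :
    conePt (p.1.1 0) (CBasis.face 0 p) = cls p := by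
  have h : (∀ i, (CBasis.face 0 p).1.1 i ≠ p.1.1 0) ∧ ∀ x, (CBasis.face 0 p).1.2 x ≠ p.1.1 0 := by
    refine ⟨fun i hi => ?_, fun x => (p.2 0 x).symm⟩
    exact Fin.succAbove_ne 0 i (p.1.1.injective hi)
  rw [conePt, dif_pos h]
  congr 1
  refine CBasis.ext' (fun j => ?_) rfl
  refine Fin.cases ?_ (fun j => ?_) j
  · simp [cone]
  · simp [cone, CBasis.face]

/-! ### The identity `∂² = 0` -/

/-- Induction along `p = cone a q`, with `q` the tail of `p`: applying `∂` twice and using the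
homotopy formula for `q` and for its faces turns `∂∂p` into `cone (∂∂q)`. -/
theorem d_d_cls (k : ℕ) (p : CBasis S T (k + 2)) : d k (d (k + 1) (cls p)) = 0 := by
  induction k with
  | zero =>
    have hf := fun x => (p.2 0 x).symm
    set q := CBasis.face 0 p with hq
    have h := d_conePt_succ (p.1.1 0) q hf
    rw [conePt_face_zero] at h
    rw [eq_sub_of_add_eq h, map_sub, map_neg, map_sum, d_cls 0 q, sub_eq_zero,
      ← Finset.sum_neg_distrib]
    refine Finset.sum_congr rfl fun i _ => ?_
    rw [map_zsmul, d_conePt_zero _ (CBasis.face i q) hf, smul_neg]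
  | succ k ih =>
    have hf := fun x => (p.2 0 x).symm
    set q := CBasis.face 0 p with hq
    set t : (↥S ↪ ↥T) → Option ↥T := fun _ => some (p.1.1 0) with ht
    have h1 := homotopy_succ (t := t) (p := q) rfl hf
    have h2 : d (k + 1) (coneHom t (k + 1) (d (k + 1) (cls q))) +
        coneHom t k (d k (d (k + 1) (cls q))) = -d (k + 1) (cls q) := by
      rw [d_cls (k + 1) q]
      simp only [map_sum, map_zsmul]
      rw [← Finset.sum_add_distrib, ← Finset.sum_neg_distrib]
      refine Finset.sum_congr rfl fun i _ => ?_
      rw [← smul_add, homotopy_succ (t := t) (p := CBasis.face i q) rfl hf, smul_neg]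
    rw [ih q, map_zero, add_zero] at h2
    rw [coneHom_some (t := t) (p := q) rfl, conePt_face_zero] at h1
    rw [eq_sub_of_add_eq h1, map_sub, map_neg, h2, sub_self]

/-! ### The augmentation and the contraction -/

open Classical in
/-- A vertex outside the image of `f`, if there is one. -/
noncomputable def apex (f : ↥S ↪ ↥T) : Option ↥T :=
  if h : ∃ a, ∀ x, f x ≠ a then some h.choose else none

theorem apex_cases (f : ↥S ↪ ↥T) :
    (∃ a, apex f = some a ∧ ∀ x, f x ≠ a) ∨ (apex f = none ∧ Function.Bijective f) := by
  by_cases h : ∃ a, ∀ x, f x ≠ a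
  · exact Or.inl ⟨h.choose, dif_pos h, h.choose_spec⟩
  · refine Or.inr ⟨dif_neg h, f.injective, fun a => ?_⟩
    by_contra ha
    exact h ⟨a, fun x hx => ha ⟨x, hx⟩⟩

theorem not_bijective {k : ℕ} (p : CBasis S T (k + 1)) : ¬ Function.Bijective p.1.2 := fun h =>
  let ⟨x, hx⟩ := h.2 (p.1.1 0)
  p.2 0 x hx.symm

/-- The basis element `((), f)` of degree zero. -/
def base (f : ↥S ↪ ↥T) : CBasis S T 0 :=
  ⟨(⟨fun i => i.elim0, fun i => i.elim0⟩, f), fun i => i.elim0⟩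

open Classical in
/-- The augmentation `ε : C_0(S,T) → ℤ[Bij(S,T)]`. -/
noncomputable def aug : CTerm S T 0 →+ FreeAbelianGroup (↥S ≃ ↥T) :=
  liftHom (fun p => if h : Function.Bijective p.1.2 then
      FreeAbelianGroup.of (Equiv.ofBijective _ h) else 0) (by
    intro σ p
    have : CBasis.act σ p = p := CBasis.ext' (fun i => i.elim0) rfl
    rw [this, Subsingleton.elim σ 1]
    simp)

open Classical in
theorem aug_cls (p : CBasis S T 0) : aug (cls p) = if h : Function.Bijective p.1.2 then
    FreeAbelianGroup.of (Equiv.ofBijective _ h) else 0 :=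
  liftHom_cls _ _ p

/-- The section of the augmentation sending a bijection to the corresponding empty tuple. -/
noncomputable def sec : FreeAbelianGroup (↥S ≃ ↥T) →+ CTerm S T 0 :=
  FreeAbelianGroup.lift fun e => cls (base e.toEmbedding)

theorem aug_sec (x : FreeAbelianGroup (↥S ≃ ↥T)) : aug (sec x) = x := by
  have : (aug (S := S) (T := T)).comp sec = AddMonoidHom.id _ := by
    apply FreeAbelianGroup.lift_ext
    intro e
    have he : Function.Bijective (base e.toEmbedding).1.2 := e.bijective
    have : Equiv.ofBijective _ he = e := Equiv.ext fun _ => rfl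
    simp [sec, aug_cls, dif_pos he, this]
  exact DFunLike.congr_fun this x

/-- In degree zero the homotopy contracts onto the bijections: a bijective `f` is fixed by
`sec ∘ aug`, any other `f` is killed by `aug`. -/
theorem homotopy_zero (x : CTerm S T 0) : d 0 (coneHom apex 0 x) = sec (aug x) - x := by
  have : (d 0).comp (coneHom (apex (S := S) (T := T)) 0) = sec.comp aug - AddMonoidHom.id _ := by
    apply hom_ext
    intro p
    change d 0 (coneHom apex 0 (cls p)) = sec (aug (cls p)) - cls p
    rcases apex_cases p.1.2 with ⟨a, h, hf⟩ | ⟨h, hb⟩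
    · have hb : ¬ Function.Bijective p.1.2 := fun hb => (hb.2 a).elim hf
      rw [coneHom_some h, d_conePt_zero a p hf, aug_cls, dif_neg hb, map_zero, zero_sub]
    · rw [coneHom_none h, map_zero, aug_cls, dif_pos hb, sec, FreeAbelianGroup.lift_apply_of]
      have : base (Equiv.ofBijective _ hb).toEmbedding = p := by
        exact CBasis.ext' (fun i => i.elim0) rfl
      rw [this, sub_self]
  exact DFunLike.congr_fun this x

/-- In positive degree no basis element has a bijective second component, so the homotopy is
a contraction. -/
theorem homotopy_pos (k : ℕ) (x : CTerm S T (k + 1)) :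
    d (k + 1) (coneHom apex (k + 1) x) + coneHom apex k (d k x) = -x := by
  have : (d (k + 1)).comp (coneHom (apex (S := S) (T := T)) (k + 1)) +
      (coneHom apex k).comp (d k) = -AddMonoidHom.id _ := by
    apply hom_ext
    intro p
    change d (k + 1) (coneHom apex (k + 1) (cls p)) + coneHom apex k (d k (cls p)) = -cls p
    rcases apex_cases p.1.2 with ⟨a, h, hf⟩ | ⟨h, hb⟩
    · exact homotopy_succ h hf
    · exact absurd hb (not_bijective p)
  exact DFunLike.congr_fun this x

theorem d_comp_d (k : ℕ) : (d (S := S) (T := T) k).comp (d (k + 1)) = 0 :=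
  hom_ext (d_d_cls k)

theorem aug_comp_d : (aug (S := S) (T := T)).comp (d 0) = 0 := by
  apply hom_ext
  intro p
  change aug (d 0 (cls p)) = 0
  rw [d_cls, map_sum]
  refine Finset.sum_eq_zero fun i _ => ?_
  have : ¬ Function.Bijective (CBasis.face i p).1.2 := not_bijective p
  rw [map_zsmul, aug_cls, dif_neg this, smul_zero]

end CComplex

/-- **Proposition 4.5** (Church–Ellenberg). The complex `C_•(S,T) → ℤ[Bij(S,T)]` with
`∂((u_1,…,u_k), f) = Σ_{i=1}^k (−1)^i ((u_1,…,û_i,…,u_k), f)` (written 0-indexed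
below) and augmentation `ε(f) = f` if `f` is bijective, `0` otherwise, is well
defined and exact: `∂² = 0`, `ε∘∂ = 0`, `ε` is surjective and induces an isomorphism
`H_0(C_•(S,T)) ≅ ℤ[Bij(S,T)]` (i.e. `ker ε = im ∂`), and `H_i(C_•(S,T)) = 0` for all
`i > 0` (i.e. `ker ∂ = im ∂` in every positive degree). -/
theorem C_complex_resolution (S T : Finset ℤ) :
    ∃ (d : ∀ k : ℕ, CTerm S T (k + 1) →+ CTerm S T k)
      (ε : CTerm S T 0 →+ FreeAbelianGroup (↥S ≃ ↥T)),
      (∀ (k : ℕ) (p : CBasis S T (k + 1)),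
        d k (QuotientAddGroup.mk (FreeAbelianGroup.of p)) =
          ∑ i : Fin (k + 1), ((-1 : ℤ) ^ ((i : ℕ) + 1)) •
            (QuotientAddGroup.mk (FreeAbelianGroup.of (CBasis.face i p)) :
              CTerm S T k)) ∧
      (∀ p : CBasis S T 0,
        ε (QuotientAddGroup.mk (FreeAbelianGroup.of p)) =
          if h : Function.Bijective p.1.2 then
            FreeAbelianGroup.of (Equiv.ofBijective _ h) else 0) ∧
      (∀ k : ℕ, (d k).comp (d (k + 1)) = 0) ∧
      (ε.comp (d 0) = 0) ∧
      Function.Surjective ε ∧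
      (ε.ker = (d 0).range) ∧
      (∀ k : ℕ, (d k).ker = (d (k + 1)).range) := by
  refine ⟨CComplex.d, CComplex.aug, CComplex.d_cls, fun p => ?_, CComplex.d_comp_d,
    CComplex.aug_comp_d, fun x => ⟨_, CComplex.aug_sec x⟩, ?_, fun k => ?_⟩
  · refine (CComplex.aug_cls p).trans ?_
    congr
  · ext x
    constructor
    · intro hx
      refine ⟨-CComplex.coneHom CComplex.apex 0 x, ?_⟩
      rw [map_neg, CComplex.homotopy_zero, AddMonoidHom.mem_ker.1 hx, map_zero, zero_sub, neg_neg]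
    · rintro ⟨y, rfl⟩
      exact DFunLike.congr_fun CComplex.aug_comp_d y
  · ext x
    constructor
    · intro hx
      refine ⟨-CComplex.coneHom CComplex.apex (k + 1) x, ?_⟩
      have h := CComplex.homotopy_pos k x
      rw [AddMonoidHom.mem_ker.1 hx, map_zero, add_zero] at h
      rw [map_neg, h, neg_neg]
    · rintro ⟨y, rfl⟩
      exact DFunLike.congr_fun (CComplex.d_comp_d k) y
end
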